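/- arXiv:2202.09858 — 10 statements merged into one kernel-verified Lean document; each statement's English description precedes it below -/
import Mathlib

section
/- Let M, N be natural numbers with 1 ≤ N ≤ M and 2 ≤ M, and let φ : Fin M → EuclideanSpace ℝ (Fin N) be a family of unit vectors (‖φ m‖ = 1 for all m). Then there exist indices m ≠ n such that |⟨φ m, φ n⟩| ≥ √((M − N) / (N * (M − 1))). -/
open scoped RealInnerProductSpace

/-!
The sum of all squared inner products `∑ m n, ⟪φ m, φ n⟫ ^ 2` is the squared Frobenius norm of the
frame matrix `S i j = ∑ m, φ m i * φ m j`. Keeping only the diagonal of `S`, whose sum (the trace)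
is `M`, Cauchy–Schwarz gives the lower bound `M ^ 2 / N` (`sq_card_le_frame_potential`).
The diagonal terms `m = n` contribute `M`, so the `M (M - 1)` off-diagonal terms have average at
least `(M ^ 2 / N - M) / (M (M - 1)) = (M - N) / (N (M - 1))`, and one of them reaches it.
-/

lemma frame_potential_eq {M N : ℕ} (φ : Fin M → EuclideanSpace ℝ (Fin N)) :
    ∑ m, ∑ n, ⟪φ m, φ n⟫ ^ 2 = ∑ i, ∑ j, (∑ m, φ m i * φ m j) ^ 2 := by
  have h1 : ∀ m n, ⟪φ m, φ n⟫ ^ 2 = ∑ i, ∑ j, (φ m i * φ n i) * (φ m j * φ n j) := by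
    intro m n
    rw [PiLp.inner_apply, sq, Finset.sum_mul_sum]
    refine Finset.sum_congr rfl fun i _ => Finset.sum_congr rfl fun j _ => ?_
    simp only [RCLike.inner_apply, conj_trivial]
    ring
  have h2 : ∀ i j, (∑ m, φ m i * φ m j) ^ 2
      = ∑ m, ∑ n, (φ m i * φ n i) * (φ m j * φ n j) := by
    intro i j
    rw [sq, Finset.sum_mul_sum]
    refine Finset.sum_congr rfl fun m _ => Finset.sum_congr rfl fun n _ => ?_
    ring
  simp_rw [h1, h2]
  -- Swap `(m, n)` with `(i, j)` by moving `i`, and then `j`, to the front.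
  rw [Finset.sum_congr rfl fun m _ => Finset.sum_comm, Finset.sum_comm]
  refine Finset.sum_congr rfl fun i _ => ?_
  rw [Finset.sum_congr rfl fun m _ => Finset.sum_comm, Finset.sum_comm]

lemma sq_card_le_frame_potential {M N : ℕ} (φ : Fin M → EuclideanSpace ℝ (Fin N))
    (hunit : ∀ m, ‖φ m‖ = 1) :
    (M : ℝ) ^ 2 ≤ N * ∑ m, ∑ n, ⟪φ m, φ n⟫ ^ 2 := by
  have htrace : ∑ i, ∑ m, φ m i * φ m i = (M : ℝ) := by
    rw [Finset.sum_comm]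
    have h : ∀ m, ∑ i, φ m i * φ m i = 1 := by
      intro m
      have := EuclideanSpace.real_norm_sq_eq (φ m)
      rw [hunit m] at this
      simpa [sq] using this.symm
    simp [h]
  have hcs := sq_sum_le_card_mul_sum_sq (s := (Finset.univ : Finset (Fin N)))
    (f := fun i => ∑ m, φ m i * φ m i)
  rw [htrace, Finset.card_univ, Fintype.card_fin] at hcs
  rw [frame_potential_eq]
  refine hcs.trans (mul_le_mul_of_nonneg_left ?_ (Nat.cast_nonneg N))
  refine Finset.sum_le_sum fun i _ => ?_
  exact Finset.single_le_sum (f := fun j => (∑ m, φ m i * φ m j) ^ 2)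
    (fun j _ => sq_nonneg _) (Finset.mem_univ i)

/-- **Welch bound.** For any family of `M` unit vectors in `ℝ^N` with `1 ≤ N ≤ M` and
`2 ≤ M`, there exist two distinct indices whose inner product has absolute value at least
`√((M − N) / (N (M − 1)))`. -/
theorem welch_bound (M N : ℕ) (hN : 1 ≤ N) (hNM : N ≤ M) (hM : 2 ≤ M)
    (φ : Fin M → EuclideanSpace ℝ (Fin N)) (hunit : ∀ m, ‖φ m‖ = 1) :
    ∃ m n : Fin M, m ≠ n ∧
      Real.sqrt (((M : ℝ) - N) / (N * ((M : ℝ) - 1))) ≤ |⟪φ m, φ n⟫| := by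
  by_contra! hcon
  have hN' : (1 : ℝ) ≤ N := by exact_mod_cast hN
  have hM' : (2 : ℝ) ≤ M := by exact_mod_cast hM
  set c : ℝ := ((M : ℝ) - N) / (N * ((M : ℝ) - 1)) with hc
  have hlt : ∀ m n, m ≠ n → ⟪φ m, φ n⟫ ^ 2 < c := by
    intro m n hmn
    have h := (Real.lt_sqrt (abs_nonneg _)).1 (hcon m n hmn)
    rwa [sq_abs] at h
  have hrow : ∀ m, ∑ n, ⟪φ m, φ n⟫ ^ 2 < 1 + (M - 1) * c := by
    intro m
    have : Nontrivial (Fin M) := Fin.nontrivial_iff_two_le.2 hM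
    obtain ⟨k, hk⟩ := exists_ne m
    rw [← Finset.add_sum_erase _ _ (Finset.mem_univ m)]
    have hoff : ∑ n ∈ Finset.univ.erase m, ⟪φ m, φ n⟫ ^ 2 < ∑ _n ∈ Finset.univ.erase m, c :=
      Finset.sum_lt_sum_of_nonempty ⟨k, by simp [hk]⟩
        fun n hn => hlt m n (Finset.ne_of_mem_erase hn).symm
    rw [Finset.sum_const, Finset.card_erase_of_mem (Finset.mem_univ m), Finset.card_univ,
      Fintype.card_fin, nsmul_eq_mul, Nat.cast_sub (by omega), Nat.cast_one] at hoff
    rw [real_inner_self_eq_norm_sq, hunit m]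
    linarith
  have htotal : ∑ m, ∑ n, ⟪φ m, φ n⟫ ^ 2 < M * (1 + (M - 1) * c) := by
    have h := Finset.sum_lt_sum_of_nonempty (s := (Finset.univ : Finset (Fin M)))
      ⟨⟨0, by omega⟩, Finset.mem_univ _⟩ fun m _ => hrow m
    simpa [mul_add] using h
  -- The constant `c` is chosen so that `N * M * (1 + (M - 1) * c) = M ^ 2`.
  have hval : (N : ℝ) * (M * (1 + (M - 1) * c)) = M ^ 2 := by
    have h1 : (M : ℝ) - 1 ≠ 0 := by linarith
    have h2 : (N : ℝ) ≠ 0 := by linarith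
    rw [hc]
    field_simp
    ring
  have hbound := sq_card_le_frame_potential φ hunit
  have := mul_lt_mul_of_pos_left htotal (by linarith : (0 : ℝ) < N)
  linarith
end

section
/- Let M, N be natural numbers with 1 ≤ N ≤ M and 2 ≤ M, and let φ : Fin M → EuclideanSpace ℝ (Fin N) be a family of unit vectors. Then |⟨φ m, φ n⟩| ≤ √((M − N) / (N * (M − 1))) holds for all m ≠ n if and only if the family is equiangular and a tight frame. -/
/-!
The proof rests on the frame potential identity: for unit vectors `φ m` with frame operator
`S = ∑ m, φ m (φ m)ᵀ`, which has trace `M`, the squared Frobenius norm of `S - (M / N) • 1`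
equals `∑ m n, ⟪φ m, φ n⟫ ^ 2 - M ^ 2 / N` (`frame_deviation`).

If every off-diagonal `⟪φ m, φ n⟫ ^ 2` is at most `w = (M - N) / (N (M - 1))`, then the double sum
is at most `M + M (M - 1) w = M ^ 2 / N`. Hence the Frobenius norm vanishes, so the frame is tight
with constant `M / N`, and every off-diagonal inequality is an equality, so it is equiangular.

Conversely, summing the tight frame identity over the standard basis gives `c N = M`, and
evaluating it at `φ n` gives `1 + (M - 1) α ^ 2 = c`; together these force `α ^ 2 = w`.
-/

open scoped RealInnerProductSpace

namespace WelchBound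

lemma inner_eq_sum {N : ℕ} (x y : EuclideanSpace ℝ (Fin N)) : ⟪x, y⟫ = ∑ i, x i * y i := by
  rw [PiLp.inner_apply]
  exact Finset.sum_congr rfl fun i _ => by simp [mul_comm]

/-- The entries of the frame operator `∑ m, φ m (φ m)ᵀ` in the standard basis. -/
def frameMat {M N : ℕ} (φ : Fin M → EuclideanSpace ℝ (Fin N)) (i j : Fin N) : ℝ :=
  ∑ m, φ m i * φ m j

lemma sum_inner_sq {M N : ℕ} (φ : Fin M → EuclideanSpace ℝ (Fin N))
    (ψ : EuclideanSpace ℝ (Fin N)) :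
    ∑ m, ⟪ψ, φ m⟫ ^ 2 = ∑ i, ∑ j, ψ i * ψ j * frameMat φ i j := by
  simp only [inner_eq_sum, frameMat, sq, Finset.sum_mul_sum]
  simp only [Finset.mul_sum]
  rw [Finset.sum_comm]
  refine Finset.sum_congr rfl fun i _ => ?_
  rw [Finset.sum_comm]
  refine Finset.sum_congr rfl fun j _ => Finset.sum_congr rfl fun m _ => ?_
  ring

lemma sum_sum_inner_sq {M N : ℕ} (φ : Fin M → EuclideanSpace ℝ (Fin N)) :
    ∑ m, ∑ n, ⟪φ m, φ n⟫ ^ 2 = ∑ i, ∑ j, frameMat φ i j ^ 2 := by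
  simp only [sum_inner_sq]
  rw [Finset.sum_comm]
  refine Finset.sum_congr rfl fun i _ => ?_
  rw [Finset.sum_comm]
  refine Finset.sum_congr rfl fun j _ => ?_
  rw [← Finset.sum_mul, sq]
  rfl

lemma sum_coord_sq {N : ℕ} (x : EuclideanSpace ℝ (Fin N)) : ∑ i, x i * x i = ‖x‖ ^ 2 := by
  rw [← inner_eq_sum, real_inner_self_eq_norm_sq]

lemma trace_frameMat {M N : ℕ} (φ : Fin M → EuclideanSpace ℝ (Fin N))
    (hunit : ∀ m, ‖φ m‖ = 1) : ∑ i, frameMat φ i i = M := by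
  simp only [frameMat]
  rw [Finset.sum_comm]
  simp [sum_coord_sq, hunit]

/-- The frame potential exceeds `M ^ 2 / N` by the squared Frobenius distance of the frame operator
from `(M / N) • 1`. -/
lemma frame_deviation {M N : ℕ} (hN : 1 ≤ N) (φ : Fin M → EuclideanSpace ℝ (Fin N))
    (hunit : ∀ m, ‖φ m‖ = 1) :
    ∑ i, ∑ j, (frameMat φ i j - if i = j then (M / N : ℝ) else 0) ^ 2
      = ∑ m, ∑ n, ⟪φ m, φ n⟫ ^ 2 - (M : ℝ) ^ 2 / N := by
  have hN0 : (N : ℝ) ≠ 0 := by positivity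
  have expand : ∀ i j : Fin N, (frameMat φ i j - if i = j then (M / N : ℝ) else 0) ^ 2
      = frameMat φ i j ^ 2
        + if i = j then (-2 * (M / N : ℝ) * frameMat φ i j + (M / N : ℝ) ^ 2) else 0 := by
    intro i j
    split_ifs <;> ring
  simp only [expand, Finset.sum_add_distrib, Finset.sum_ite_eq, Finset.mem_univ, if_true,
    ← Finset.mul_sum, trace_frameMat φ hunit, sum_sum_inner_sq, Finset.sum_const,
    Finset.card_univ, Fintype.card_fin, nsmul_eq_mul]
  field_simp
  ring

end WelchBound

open WelchBound in
/-- **Equality in the Welch bound.** A family of `M` unit vectors in `ℝ^N` (with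
`1 ≤ N ≤ M`, `2 ≤ M`) attains the Welch bound, i.e. all pairwise inner products satisfy
`|⟪φ m, φ n⟫| ≤ √((M − N)/(N(M − 1)))`, if and only if the family is equiangular and is a
tight frame. -/
theorem welch_bound_equality_iff_etf (M N : ℕ) (hN : 1 ≤ N) (hNM : N ≤ M) (hM : 2 ≤ M)
    (φ : Fin M → EuclideanSpace ℝ (Fin N)) (hunit : ∀ m, ‖φ m‖ = 1) :
    (∀ m n : Fin M, m ≠ n →
        |⟪φ m, φ n⟫| ≤ Real.sqrt (((M : ℝ) - N) / (N * ((M : ℝ) - 1)))) ↔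
      ((∃ α : ℝ, ∀ m n : Fin M, m ≠ n → |⟪φ m, φ n⟫| = α) ∧
        (∃ c : ℝ, 0 < c ∧ ∀ ψ : EuclideanSpace ℝ (Fin N),
          ∑ m : Fin M, ⟪ψ, φ m⟫ ^ 2 = c * ‖ψ‖ ^ 2)) := by
  have hN0 : (0 : ℝ) < N := by exact_mod_cast hN
  have hM1 : (0 : ℝ) < (M : ℝ) - 1 := by
    have : (2 : ℝ) ≤ M := by exact_mod_cast hM
    linarith
  have hM0 : (0 : ℝ) < M := by linarith
  have hNM' : (0 : ℝ) ≤ (M : ℝ) - N := sub_nonneg.2 (by exact_mod_cast hNM)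
  set w : ℝ := ((M : ℝ) - N) / (N * ((M : ℝ) - 1)) with hw
  have hw0 : 0 ≤ w := by positivity
  have hwM : 1 + ((M : ℝ) - 1) * w = M / N := by
    rw [hw]
    field_simp
    ring
  have hself : ∀ m, ⟪φ m, φ m⟫ = (1 : ℝ) := fun m => by
    rw [real_inner_self_eq_norm_sq, hunit]
    norm_num
  have hrow : ∀ (x : ℝ) (m : Fin M),
      ∑ n, (if m = n then (1 : ℝ) else x) = 1 + ((M : ℝ) - 1) * x := by
    intro x m
    have : ∀ n, (if m = n then (1 : ℝ) else x) = x + if m = n then 1 - x else 0 := by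
      intro n
      split_ifs <;> ring
    simp only [this, Finset.sum_add_distrib, Finset.sum_ite_eq, Finset.mem_univ, if_true,
      Finset.sum_const, Finset.card_univ, Fintype.card_fin, nsmul_eq_mul]
    ring
  constructor
  · intro h
    have hle : ∀ m n, ⟪φ m, φ n⟫ ^ 2 ≤ if m = n then (1 : ℝ) else w := by
      intro m n
      split_ifs with hmn
      · rw [← hmn, hself]
        norm_num
      · rw [← sq_abs, ← Real.sq_sqrt hw0]
        exact pow_le_pow_left₀ (abs_nonneg _) (h m n hmn) 2
    have hsum : ∑ m : Fin M, ∑ n : Fin M, (if m = n then (1 : ℝ) else w) = (M : ℝ) ^ 2 / N := by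
      simp only [hrow, hwM, Finset.sum_const, Finset.card_univ, Fintype.card_fin, nsmul_eq_mul]
      ring
    have hupper : ∑ m, ∑ n, ⟪φ m, φ n⟫ ^ 2 ≤ (M : ℝ) ^ 2 / N :=
      hsum ▸ Finset.sum_le_sum fun m _ => Finset.sum_le_sum fun n _ => hle m n
    have hdev := frame_deviation hN φ hunit
    have hnonneg : 0 ≤ ∑ i, ∑ j, (frameMat φ i j - if i = j then (M / N : ℝ) else 0) ^ 2 :=
      Finset.sum_nonneg fun i _ => Finset.sum_nonneg fun j _ => sq_nonneg _
    have heq : ∑ m, ∑ n, ⟪φ m, φ n⟫ ^ 2 = (M : ℝ) ^ 2 / N := by linarith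
    rw [heq, sub_self] at hdev
    refine ⟨⟨Real.sqrt w, fun m n hmn => ?_⟩, ⟨M / N, by positivity, fun ψ => ?_⟩⟩
    · -- Equal sums of termwise comparable families are termwise equal.
      have h1 := (Finset.sum_eq_sum_iff_of_le
        (fun m _ => Finset.sum_le_sum fun n _ => hle m n)).1 (heq.trans hsum.symm) m
        (Finset.mem_univ m)
      have h2 := (Finset.sum_eq_sum_iff_of_le (fun n _ => hle m n)).1 h1 n (Finset.mem_univ n)
      rw [if_neg hmn] at h2
      rw [← h2, Real.sqrt_sq_eq_abs]
    · have hS : ∀ i j, frameMat φ i j = if i = j then (M / N : ℝ) else 0 := by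
        intro i j
        have h1 := (Finset.sum_eq_zero_iff_of_nonneg
          (fun i _ => Finset.sum_nonneg fun j _ => sq_nonneg _)).1 hdev i (Finset.mem_univ i)
        have h2 := (Finset.sum_eq_zero_iff_of_nonneg (fun j _ => sq_nonneg _)).1 h1 j
          (Finset.mem_univ j)
        exact sub_eq_zero.1 (pow_eq_zero_iff two_ne_zero |>.1 h2)
      simp only [sum_inner_sq, hS, mul_ite, mul_zero, Finset.sum_ite_eq, Finset.mem_univ, if_true]
      rw [← Finset.sum_mul, sum_coord_sq, mul_comm]
  · rintro ⟨⟨α, hα⟩, c, -, hc⟩ m n hmn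
    have hcN : c * N = M := by
      have hdiag : ∀ i, frameMat φ i i = c := by
        intro i
        have := hc (EuclideanSpace.single i 1)
        simpa [sq, frameMat, EuclideanSpace.inner_single_left] using this
      have := trace_frameMat φ hunit
      simp only [hdiag, Finset.sum_const, Finset.card_univ, Fintype.card_fin, nsmul_eq_mul] at this
      linarith
    have hcα : 1 + ((M : ℝ) - 1) * α ^ 2 = c := by
      have h1 := hc (φ m)
      have h2 : ∀ k, ⟪φ m, φ k⟫ ^ 2 = if m = k then (1 : ℝ) else α ^ 2 := by
        intro k
        split_ifs with hk
        · rw [← hk, hself]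
          norm_num
        · rw [← hα m k hk, sq_abs]
      simp only [h2, hrow, hunit] at h1
      linarith
    have hαw : α ^ 2 = w := by
      have hc' : c = M / N := by
        rw [← hcN]
        field_simp
      have : ((M : ℝ) - 1) * α ^ 2 = ((M : ℝ) - 1) * w := by linarith
      exact mul_left_cancel₀ hM1.ne' this
    rw [hα m n hmn, ← hαw, Real.sqrt_sq_eq_abs]
    exact le_abs_self α
end

section
/- Let Γ be a strongly regular graph with parameters (v, k, λ, μ) on a finite vertex type, with 0 < μ, 0 < k, and k < v − 1. Let A be the adjacency matrix of Γ over ℝ, I the identity matrix, and J the all-ones matrix. Let s : ℝ satisfy s² + (μ − λ)·s + (μ − k) = 0, and set E = I + (s/k)·A + ((−s − 1)/(v − k − 1))·(J − I − A). Then A * E = s • E. -/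
/-!
Write `B = J - I - A` for the adjacency matrix of the complement. Strong regularity gives
`A² = k I + l A + m B`, and regularity gives `A J = k J`, hence
`A B = (k - l - 1) A + (k - m) B`. Thus `A E` is a combination of `I`, `A`, `B`, and comparing
its coefficients with those of `s E` leaves three scalar identities. They follow from the quadratic
equation for `s` and the parameter relation `k (k - l - 1) = (v - k - 1) m`, the latter being
obtained over `ℝ` by evaluating `A² J` in two ways.
-/

open Matrix

/-- Let `Γ` be a primitive strongly regular graph with parameters `(v, k, λ, μ)`
(`0 < μ`, `0 < k`, `k < v - 1`), with real adjacency matrix `A`, and let `s` be a root of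
`ξ² + (μ − λ)ξ + (μ − k) = 0`.  Then the matrix
`E = I + (s/k)·A + ((−s−1)/(v−k−1))·(J − I − A)` satisfies `A * E = s • E`; i.e. every
column of `E` is an eigenvector of `A` with eigenvalue `s`. -/
theorem srg_projection_eigenvector {V : Type*} [Fintype V] [DecidableEq V]
    (G : SimpleGraph V) [DecidableRel G.Adj] (v k l m : ℕ)
    (h : G.IsSRGWith v k l m) (hm : 0 < m) (hk : 0 < k) (hkv : k < v - 1)
    (s : ℝ) (hs : s ^ 2 + ((m : ℝ) - l) * s + ((m : ℝ) - k) = 0)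
    (A E J : Matrix V V ℝ) (hA : A = G.adjMatrix ℝ) (hJ : J = Matrix.of fun _ _ => (1 : ℝ))
    (hE : E = (1 : Matrix V V ℝ) + (s / (k : ℝ)) • A +
      ((-s - 1) / ((v : ℝ) - k - 1)) • (J - 1 - A)) :
    A * E = s • E := by
  have hkv' : k + 1 < v := by omega
  have hk0 : (k : ℝ) ≠ 0 := by positivity
  have hn0 : (v : ℝ) - k - 1 ≠ 0 := by
    have : (k : ℝ) + 1 < v := by exact_mod_cast hkv'
    intro h0
    linarith
  have hcompl : Gᶜ.adjMatrix ℝ = J - 1 - A := by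
    subst hA hJ
    ext i j
    by_cases hij : i = j
    · subst hij
      simp
    · by_cases hadj : G.Adj i j <;> simp [hij, hadj]
  have hAA : A * A = (k : ℝ) • (1 : Matrix V V ℝ) + (l : ℝ) • A + (m : ℝ) • (J - 1 - A) := by
    have h2 := h.matrix_eq (α := ℝ)
    rw [hcompl, ← hA, pow_two] at h2
    simpa only [Nat.cast_smul_eq_nsmul] using h2
  have hAJ : A * J = (k : ℝ) • J := by
    subst hA hJ
    ext i j
    simp [h.regular i]
  have hJJ : J * J = (v : ℝ) • J := by
    subst hJ
    ext i j
    simp [Matrix.mul_apply, h.card]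
  have hparam : (k : ℝ) * (k - l - 1) = (v - k - 1) * m := by
    have hV : 0 < Fintype.card V := by rw [h.card]; omega
    obtain ⟨x⟩ := Fintype.card_pos_iff.mp hV
    have h1 : A * (A * J) = A * A * J := (Matrix.mul_assoc _ _ _).symm
    rw [hAA, hAJ, Matrix.mul_smul, hAJ] at h1
    simp only [add_mul, sub_mul, Matrix.smul_mul, hAJ, hJJ, one_mul] at h1
    have h2 := congrFun (congrFun h1 x) x
    simp only [hJ, Matrix.smul_apply, Matrix.add_apply, Matrix.sub_apply, Matrix.of_apply,
      smul_eq_mul, mul_one] at h2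
    linarith
  -- The coefficients of `I`, `A` and `B` in `A E = s E`.
  set a : ℝ := s / k with ha
  set c : ℝ := (-s - 1) / ((v : ℝ) - k - 1) with hc
  have e1 : a * k = s := div_mul_cancel₀ _ hk0
  have hcn : c * ((v : ℝ) - k - 1) = -s - 1 := div_mul_cancel₀ _ hn0
  have e2 : 1 + a * l + c * (k - l - 1) = s * a := by
    apply mul_left_cancel₀ hk0
    linear_combination (l - s) * e1 + c * hparam + m * hcn - hs
  have e3 : a * m + c * (k - m) = s * c := by
    apply mul_left_cancel₀ hn0
    apply mul_left_cancel₀ hk0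
    linear_combination ((v : ℝ) - k - 1) * m * e1 + k * (k - m - s) * hcn - s * hparam + k * hs
  have hAE : A * E = A + a • (A * A) + c • (A * J - A - A * A) := by
    rw [hE]
    simp only [mul_add, mul_sub, mul_one, Matrix.mul_smul]
  rw [hAE, hAJ, hAA, hE]
  ext i j
  simp only [Matrix.smul_apply, Matrix.add_apply, Matrix.sub_apply, smul_eq_mul]
  linear_combination (1 : Matrix V V ℝ) i j * e1 + A i j * e2 +
    (J i j - (1 : Matrix V V ℝ) i j - A i j) * e3
end

section
/- Let Γ be a strongly regular graph with parameters (v, k, λ, μ) on a finite vertex type, with 0 < μ, 0 < k, and k < v − 1. Let A be the adjacency matrix of Γ over ℝ, I the identity matrix, and J the all-ones matrix. Let s : ℝ satisfy s² + (μ − λ)·s + (μ − k) = 0, and set E = I + (s/k)·A + ((−s − 1)/(v − k − 1))·(J − I − A). Then E * E = (1 + s²/k + (s + 1)²/(v − k − 1)) • E. -/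
/-!
In the span of `I`, `A`, `J` write `E = a I + b A + c J`. Regularity gives `J E = 0`, and
`A² = k I + l A + m (J - I - A)` gives `A E = s E`: with `r = l - m - s` the other root of the
quadratic, this amounts to `a + b r = 0`, which is equivalent to `m / k = c (1 + r)` and hence to
the counting identity `k (k - l - 1) = (v - k - 1) m`. Consequently `E² = (a + b s) E`, and
`a + b s` is the asserted scalar.
-/

open Matrix

/-- Let `Γ` be a primitive strongly regular graph with parameters `(v, k, λ, μ)`
(`0 < μ`, `0 < k`, `k < v - 1`), with real adjacency matrix `A`, and let `s` be a root of
`ξ² + (μ − λ)ξ + (μ − k) = 0`.  Then the matrix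
`E = I + (s/k)·A + ((−s−1)/(v−k−1))·(J − I − A)` satisfies
`E * E = (1 + s²/k + (s+1)²/(v−k−1)) • E`; i.e. `E` is a positive scalar multiple of an
orthogonal projection. -/
theorem srg_projection_idempotent {V : Type*} [Fintype V] [DecidableEq V]
    (G : SimpleGraph V) [DecidableRel G.Adj] (v k l m : ℕ)
    (h : G.IsSRGWith v k l m) (hm : 0 < m) (hk : 0 < k) (hkv : k < v - 1)
    (s : ℝ) (hs : s ^ 2 + ((m : ℝ) - l) * s + ((m : ℝ) - k) = 0)
    (A E J : Matrix V V ℝ) (hA : A = G.adjMatrix ℝ) (hJ : J = Matrix.of fun _ _ => (1 : ℝ))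
    (hE : E = (1 : Matrix V V ℝ) + (s / (k : ℝ)) • A +
      ((-s - 1) / ((v : ℝ) - k - 1)) • (J - 1 - A)) :
    E * E = (1 + s ^ 2 / (k : ℝ) + (s + 1) ^ 2 / ((v : ℝ) - k - 1)) • E := by
  subst hA
  have hp := h.param_eq _ (by omega)
  -- Both sides are positive, so the truncated subtraction `k - l - 1` is a true one.
  have hlk : l + 1 < k := by
    have h1 : 0 < k * (k - l - 1) := hp ▸ Nat.mul_pos (by omega) hm
    have h2 := Nat.pos_of_mul_pos_left h1
    omega
  have hpR : (k : ℝ) * (k - l - 1) = (v - k - 1) * m := by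
    obtain ⟨d, rfl⟩ := Nat.exists_eq_add_of_lt hlk
    obtain ⟨e, rfl⟩ := Nat.exists_eq_add_of_lt (show (l + 1 + d + 1) + 1 < v by omega)
    have h1 : l + 1 + d + 1 - l - 1 = d + 1 := by omega
    have h2 : l + 1 + d + 1 + 1 + e + 1 - (l + 1 + d + 1) - 1 = e + 1 := by omega
    rw [h1, h2] at hp
    have := congrArg (Nat.cast : ℕ → ℝ) hp
    push_cast at this ⊢
    linear_combination this
  have hk0 : (k : ℝ) ≠ 0 := by positivity
  have hn0 : (v : ℝ) - k - 1 ≠ 0 := by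
    have : (k : ℝ) + 1 < v := by exact_mod_cast (by omega : k + 1 < v)
    linarith
  have hJA : J * G.adjMatrix ℝ = (k : ℝ) • J := by
    ext i j
    simp [hJ, SimpleGraph.mul_adjMatrix_apply, h.regular.degree_eq]
  have hAJ : G.adjMatrix ℝ * J = (k : ℝ) • J := by
    ext i j
    simp [hJ, SimpleGraph.adjMatrix_mul_apply, h.regular.degree_eq]
  have hJJ : J * J = (v : ℝ) • J := by
    ext i j
    simp [hJ, Matrix.mul_apply, h.card]
  have hC : Gᶜ.adjMatrix ℝ = J - 1 - G.adjMatrix ℝ := by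
    ext i j
    by_cases hij : i = j
    · simp [hJ, hij]
    · by_cases ha : G.Adj i j <;> simp [hJ, hij, ha]
  have hAA : G.adjMatrix ℝ * G.adjMatrix ℝ =
      (k : ℝ) • (1 : Matrix V V ℝ) + (l : ℝ) • G.adjMatrix ℝ +
        (m : ℝ) • (J - 1 - G.adjMatrix ℝ) := by
    rw [← pow_two, h.matrix_eq, hC]
    simp only [Nat.cast_smul_eq_nsmul]
  generalize G.adjMatrix ℝ = A at *
  set c : ℝ := (-s - 1) / ((v : ℝ) - k - 1) with hc
  have hcn : c * ((v : ℝ) - k - 1) = -s - 1 := by rw [hc]; field_simp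
  set t : ℝ := s / (k : ℝ) with ht
  have htk : t * k = s := by rw [ht]; field_simp
  have hscal : 1 + s ^ 2 / (k : ℝ) + (s + 1) ^ 2 / ((v : ℝ) - k - 1) = 1 - c + (t - c) * s := by
    rw [hc, ht]; field_simp; ring
  have hkey : (m : ℝ) = k * c * (1 + l - m - s) := by
    apply mul_right_cancel₀ hn0
    linear_combination -hpR - k * (1 + l - m - s) * hcn - k * hs
  -- The relation `a + b r = 0`.
  have hab : 1 - c + (t - c) * (l - m - s) = 0 := by
    apply mul_right_cancel₀ hk0
    linear_combination (l - m - s) * htk + hkey - hs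
  have hE' : E = (1 - c) • (1 : Matrix V V ℝ) + (t - c) • A + c • J := by
    rw [hE]; module
  have hJE : J * E = 0 := by
    rw [hE']
    simp only [mul_add, mul_smul_comm, mul_one, hJA, hJJ, smul_smul, ← add_smul]
    rw [show 1 - c + (t - c) * k + c * v = 0 by linear_combination hcn + htk, zero_smul]
  have hAE : A * E = s • E := by
    rw [hE']
    simp only [mul_add, mul_smul_comm, mul_one, hAJ, hAA]
    have e1 : (t - c) * (k - m) = s * (1 - c) := by
      linear_combination (-s) * hab - (t - c) * hs
    have e2 : 1 - c + (t - c) * (l - m) = s * (t - c) := by linear_combination hab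
    have e3 : (t - c) * m + c * k = s * c := by
      apply mul_right_cancel₀ hk0
      linear_combination m * htk + s * hkey - k * c * hs
    linear_combination (norm := module) e1 • (1 : Matrix V V ℝ) + e2 • A + e3 • J
  rw [hscal]
  nth_rewrite 1 [hE']
  simp only [add_mul, smul_mul_assoc, one_mul, hJE, hAE]
  module
end

section
/- Let n ≥ 3 and let Γ be any strongly regular graph with parameters (v, k, λ, μ) = (2^{n−1}(2^n − 1), 2^{2n−2} − 1, 2^{2n−3} − 2, 2^{n−2}(2^{n−1} + 1)), with vertex set V. Set M = 2^{n−1}(2^n − 1) and N = (2^{n−1} − 1)(2^n − 1)/3. Then there exists a family φ : V → EuclideanSpace ℝ (Fin N) of M unit vectors that is equiangular and is a tight frame with frame constant M/N, i.e. Σ_{x ∈ V} ⟨ψ, φ x⟩² = (M/N)‖ψ‖² for all ψ. -/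
/-!
Put `q = 2^(n-2)`. A graph with the given parameters has adjacency eigenvalues `4q² - 1`, `q - 1` and
`-(2q + 1)`. The orthogonal projection onto the eigenspace of `-(2q + 1)` is
`P = ((2q - 2) I + J - 2A) / (6q)`, with `J` the all-ones matrix: it is symmetric, and the quadratic
equation for `A` given by strong regularity, together with `AJ = JA = (4q² - 1) J`, shows `P² = P`
(`srg_sq_eq`). Its trace, hence its rank, is `N = (2q - 1)(4q - 1) / 3`.

A symmetric idempotent matrix of trace `N` is the Gram matrix of a Parseval frame of `ℝ^N`
(`exists_parseval_of_projection`): project the standard basis to the range of the matrix and read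
off coordinates there. The diagonal entries of `P` are `(2q - 1) / (6q) = N / M` and the off-diagonal
ones are `±1 / (6q)`, so rescaling this Parseval frame by `√(M / N)` gives a tight frame of unit
vectors whose mutual inner products are all `±1 / (2q - 1)`.
-/

open scoped RealInnerProductSpace

/-- A symmetric idempotent matrix of trace `N` is the Gram matrix of a Parseval frame of `ℝ^N`. -/
lemma exists_parseval_of_projection {V : Type*} [Fintype V] [DecidableEq V] (P : Matrix V V ℝ)
    (hs : P.IsHermitian) (hP : P * P = P) (N : ℕ) (ht : P.trace = N) :
    ∃ f : V → EuclideanSpace ℝ (Fin N), (∀ x y, ⟪f x, f y⟫ = P x y) ∧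
      ∀ ψ : EuclideanSpace ℝ (Fin N), ∑ x, ⟪ψ, f x⟫ ^ 2 = ‖ψ‖ ^ 2 := by
  set T : EuclideanSpace ℝ V →ₗ[ℝ] EuclideanSpace ℝ V := Matrix.toEuclideanLin P with hT
  have hsym : T.IsSymmetric := Matrix.isSymmetric_toEuclideanLin_iff.mpr hs
  have hTT : ∀ v, T (T v) = T v := by
    intro v
    simp [hT, Matrix.toLpLin_apply, Matrix.mulVec_mulVec, hP]
  have hproj : LinearMap.IsProj (LinearMap.range T) T :=
    ⟨fun v => ⟨v, rfl⟩, by rintro _ ⟨v, rfl⟩; exact hTT v⟩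
  have hfin : Module.finrank ℝ (LinearMap.range T) = N := by
    have h1 := hproj.trace
    rw [hT, Matrix.toEuclideanLin, Matrix.toLpLin_eq_toLin, Matrix.trace_toLin_eq, ht] at h1
    exact_mod_cast h1.symm
  let b : OrthonormalBasis (Fin N) ℝ (LinearMap.range T) :=
    (stdOrthonormalBasis ℝ (LinearMap.range T)).reindex (finCongr hfin)
  let e : V → EuclideanSpace ℝ V := fun x => EuclideanSpace.single x 1
  refine ⟨fun x => b.repr ⟨T (e x), ⟨e x, rfl⟩⟩, fun x y => ?_, fun ψ => ?_⟩
  · rw [LinearIsometryEquiv.inner_map_map, Submodule.coe_inner]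
    change ⟪T (e x), T (e y)⟫ = _
    rw [hsym, hTT]
    simp [e, hT, EuclideanSpace.inner_single_left, Matrix.toLpLin_apply]
  · obtain ⟨w, rfl⟩ := b.repr.surjective ψ
    have hw : T w = (w : EuclideanSpace ℝ V) := hproj.map_id _ w.2
    have key : ∀ x, ⟪b.repr w, b.repr ⟨T (e x), ⟨e x, rfl⟩⟩⟫ = (w : EuclideanSpace ℝ V) x := by
      intro x
      rw [LinearIsometryEquiv.inner_map_map, Submodule.coe_inner]
      change ⟪(w : EuclideanSpace ℝ V), T (e x)⟫ = _
      rw [← hsym, hw]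
      simp [e, EuclideanSpace.inner_single_right]
    simp only [key]
    rw [LinearIsometryEquiv.norm_map, Submodule.coe_norm, EuclideanSpace.norm_sq_eq]
    simp

/-- The matrix `(2q - 2) I + J - 2A` is `6q` times an idempotent. -/
lemma srg_sq_eq {V : Type*} [Fintype V] [DecidableEq V] (G : SimpleGraph V) [DecidableRel G.Adj]
    {v k l μ : ℕ} (h : G.IsSRGWith v k l μ) (q : ℝ) (hv : (v : ℝ) = 2 * q * (4 * q - 1))
    (hk : (k : ℝ) = 4 * q ^ 2 - 1) (hl : (l : ℝ) = 2 * q ^ 2 - 2)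
    (hμ : (μ : ℝ) = q * (2 * q + 1)) (R : Matrix V V ℝ)
    (hR : R = (2 * q - 2) • (1 : Matrix V V ℝ) + Matrix.of (fun _ _ => 1)
      - (2 : ℝ) • G.adjMatrix ℝ) :
    R * R = (6 * q) • R := by
  set A := G.adjMatrix ℝ with hA
  set J : Matrix V V ℝ := Matrix.of (fun _ _ => 1) with hJ
  have hAA : A * A = (k - μ : ℝ) • (1 : Matrix V V ℝ) + (l - μ : ℝ) • A + (μ : ℝ) • J := by
    rw [← pow_two, h.matrix_eq]
    simp only [← Nat.cast_smul_eq_nsmul ℝ]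
    ext x y
    by_cases hxy : x = y
    · subst hxy
      simp [hA, hJ]
    · by_cases ha : G.Adj x y <;> simp [hA, hJ, hxy, ha]
  have hAJ : A * J = (k : ℝ) • J := by
    ext x y
    simp [hA, hJ, h.regular.degree_eq]
  have hJA : J * A = (k : ℝ) • J := by
    ext x y
    simp [hA, hJ, h.regular.degree_eq]
  have hJJ : J * J = (v : ℝ) • J := by
    ext x y
    simp [hJ, Matrix.mul_apply, h.card]
  rw [hR]
  simp only [mul_add, add_mul, mul_sub, sub_mul, smul_mul_assoc, mul_smul_comm, one_mul, mul_one,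
    hAA, hAJ, hJA, hJJ, hv, hk, hl, hμ]
  module

/-- The frame, for parameters expressed through `q = 2^(n-2)`. -/
lemma etf_of_srg_aux {V : Type*} [Fintype V] [DecidableEq V] (G : SimpleGraph V)
    [DecidableRel G.Adj] {v k l μ : ℕ} (h : G.IsSRGWith v k l μ) (q : ℝ) (hq : 2 ≤ q)
    (hv : (v : ℝ) = 2 * q * (4 * q - 1))
    (hk : (k : ℝ) = 4 * q ^ 2 - 1) (hl : (l : ℝ) = 2 * q ^ 2 - 2)
    (hμ : (μ : ℝ) = q * (2 * q + 1)) (N : ℕ) (hN : 3 * (N : ℝ) = (2 * q - 1) * (4 * q - 1)) :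
    ∃ φ : V → EuclideanSpace ℝ (Fin N),
      (∀ x : V, ‖φ x‖ = 1) ∧
      (∃ α : ℝ, ∀ x y : V, x ≠ y → |⟪φ x, φ y⟫| = α) ∧
      (∀ ψ : EuclideanSpace ℝ (Fin N), ∑ x : V, ⟪ψ, φ x⟫ ^ 2 = ((v : ℝ) / N) * ‖ψ‖ ^ 2) := by
  obtain ⟨R, hR⟩ : ∃ R : Matrix V V ℝ, R = (2 * q - 2) • (1 : Matrix V V ℝ)
    + Matrix.of (fun _ _ => 1) - (2 : ℝ) • G.adjMatrix ℝ := ⟨_, rfl⟩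
  have hRR := srg_sq_eq G h q hv hk hl hμ R hR
  have hq0 : q ≠ 0 := by linarith
  have hq1 : 2 * q - 1 ≠ 0 := by linarith
  have hq2 : 0 < 4 * q - 1 := by linarith
  have hNe : (N : ℝ) = (2 * q - 1) * (4 * q - 1) / 3 := by linarith
  have hdiag : ∀ x, R x x = 2 * q - 1 := by
    intro x
    simp [hR]
    ring
  have hoff : ∀ x y, x ≠ y → |R x y| = 1 := by
    intro x y hxy
    by_cases ha : G.Adj x y <;> simp [hR, hxy, ha]
    norm_num
  obtain ⟨f, hf, hfsum⟩ := exists_parseval_of_projection ((6 * q)⁻¹ • R)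
    (by
      apply Matrix.IsHermitian.ext
      intro x y
      simp [hR, Matrix.one_apply, G.adj_comm, eq_comm])
    (by
      rw [smul_mul_smul_comm, hRR, smul_smul]
      congr 1
      field_simp)
    N
    (by
      simp only [Matrix.trace, Matrix.diag, Matrix.smul_apply, hdiag, Finset.sum_const,
        Finset.card_univ, h.card, nsmul_eq_mul, smul_eq_mul, hv, hNe]
      field_simp
      ring)
  -- The scaling factor `6q / (2q - 1)` equals `v / N`.
  have hc : (0 : ℝ) ≤ 6 * q / (2 * q - 1) := by
    apply div_nonneg <;> linarith
  have hin : ∀ x y, ⟪Real.sqrt (6 * q / (2 * q - 1)) • f x,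
      Real.sqrt (6 * q / (2 * q - 1)) • f y⟫ = (2 * q - 1)⁻¹ * R x y := by
    intro x y
    rw [real_inner_smul_left, real_inner_smul_right, ← mul_assoc, Real.mul_self_sqrt hc, hf]
    simp only [Matrix.smul_apply, smul_eq_mul]
    field_simp
  refine ⟨fun x => Real.sqrt (6 * q / (2 * q - 1)) • f x, fun x => ?_,
    ⟨|(2 * q - 1)⁻¹|, fun x y hxy => ?_⟩, fun ψ => ?_⟩
  · have := hin x x
    rw [real_inner_self_eq_norm_sq, hdiag, inv_mul_cancel₀ hq1] at this
    exact (pow_eq_one_iff_of_nonneg (norm_nonneg _) two_ne_zero).mp this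
  · rw [hin, abs_mul, hoff x y hxy, mul_one]
  · simp only [real_inner_smul_right, mul_pow, Real.sq_sqrt hc]
    rw [← Finset.mul_sum, hfsum, hv, hNe]
    congr 1
    rw [div_eq_div_iff hq1 (div_ne_zero (mul_ne_zero hq1 hq2.ne') three_ne_zero)]
    ring

/-- Every strongly regular graph with the parameters of `NO⁺_{2n}(2)` (`n ≥ 3`) yields a real equiangular tight frame of `M = 2^{n-1}(2^n - 1)` unit vectors in `ℝ^N`, `N = (2^{n-1} - 1)(2^n - 1)/3`, with frame constant `M/N`. -/
theorem etf_of_srg_NOplus (n : ℕ) (hn : 3 ≤ n) {V : Type*} [Fintype V]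
    (G : SimpleGraph V) [DecidableRel G.Adj]
    (h : G.IsSRGWith (2 ^ (n - 1) * (2 ^ n - 1)) (2 ^ (2 * n - 2) - 1) (2 ^ (2 * n - 3) - 2) (2 ^ (n - 2) * (2 ^ (n - 1) + 1))) :
    ∃ φ : V → EuclideanSpace ℝ (Fin ((2 ^ (n - 1) - 1) * (2 ^ n - 1) / 3)),
      (∀ x : V, ‖φ x‖ = 1) ∧
      (∃ α : ℝ, ∀ x y : V, x ≠ y → |⟪φ x, φ y⟫| = α) ∧
      (∀ ψ : EuclideanSpace ℝ (Fin ((2 ^ (n - 1) - 1) * (2 ^ n - 1) / 3)),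
        ∑ x : V, ⟪ψ, φ x⟫ ^ 2 = (((2 ^ (n - 1) * (2 ^ n - 1) : ℕ) : ℝ) / (((2 ^ (n - 1) - 1) * (2 ^ n - 1) / 3 : ℕ) : ℝ)) * ‖ψ‖ ^ 2) := by
  classical
  obtain ⟨m, rfl⟩ : ∃ m, n = m + 3 := ⟨n - 3, by omega⟩
  obtain ⟨q, hq⟩ : ∃ q : ℕ, q = 2 ^ (m + 1) := ⟨_, rfl⟩
  have hq2 : 2 ≤ q := by
    rw [hq, pow_succ]
    have := Nat.one_le_two_pow (n := m)
    omega
  have e1 : 2 ^ (m + 3 - 1) = 2 * q := by rw [hq, ← pow_succ']; rfl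
  have e2 : 2 ^ (m + 3) = 4 * q := by rw [hq]; ring
  have e3 : 2 ^ (m + 3 - 2) = q := by rw [hq]; rfl
  have e4 : 2 ^ (2 * (m + 3) - 2) = 4 * q ^ 2 := by
    rw [show 2 * (m + 3) - 2 = 2 * m + 4 by omega, hq]; ring
  have e5 : 2 ^ (2 * (m + 3) - 3) = 2 * q ^ 2 := by
    rw [show 2 * (m + 3) - 3 = 2 * m + 3 by omega, hq]; ring
  -- A power of two is `1` or `2` modulo `3`; accordingly `3` divides `4q - 1` or `2q - 1`.
  have hdvd : 3 ∣ (2 * q - 1) * (4 * q - 1) := by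
    have hq3 : ¬ 3 ∣ q := by
      rw [hq]
      intro hd
      exact absurd (Nat.prime_three.dvd_of_dvd_pow hd) (by norm_num)
    clear hq
    rcases (by omega : q % 3 = 2 ∨ q % 3 = 1) with h3 | h3
    · exact (by omega : 3 ∣ 2 * q - 1).mul_right _
    · exact (by omega : 3 ∣ 4 * q - 1).mul_left _
  rw [e1, e2, e3, e4, e5] at h
  rw [e1, e2]
  have hqq : 4 ≤ q ^ 2 := by nlinarith
  refine etf_of_srg_aux G h q (by exact_mod_cast hq2) ?_ ?_ ?_ ?_ _ ?_
  · push_cast [show 1 ≤ 4 * q by omega]; ring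
  · push_cast [show 1 ≤ 4 * q ^ 2 by omega]; ring
  · push_cast [show 2 ≤ 2 * q ^ 2 by omega]; ring
  · push_cast; ring
  · have := Nat.mul_div_cancel' hdvd
    have hcast := congrArg (Nat.cast (R := ℝ)) this
    rw [Nat.cast_mul] at hcast
    push_cast only [Nat.cast_mul, Nat.cast_sub (show 1 ≤ 4 * q by omega),
      Nat.cast_sub (show 1 ≤ 2 * q by omega)] at hcast ⊢
    linarith
end

section
/- Let n ≥ 2 and let Γ be any strongly regular graph with parameters (v, k, λ, μ) = (2^{n−1}(2^n + 1), 2^{n−1}(2^{n−1} + 1), 2^{n−2}(2^{n−1} + 1), 2^{n−1}(2^{n−2} + 1)), with vertex set V. Set M = 2^{n−1}(2^n + 1) and N = (2^{n−1} + 1)(2^n + 1)/3. Then there exists a family φ : V → EuclideanSpace ℝ (Fin N) of M unit vectors that is equiangular and is a tight frame with frame constant M/N, i.e. Σ_{x ∈ V} ⟨ψ, φ x⟩² = (M/N)‖ψ‖² for all ψ. -/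
/-!
Write `q = 2^(n-2)`, so that the graph has parameters
`(2q(4q+1), 2q(2q+1), q(2q+1), 2q(q+1))`. Its adjacency matrix `A` has the eigenvalues
`2q(2q+1)`, `q` and `-2q`, and the orthogonal projection onto the `(-2q)`-eigenspace is
`P = (2q I + J - 2A) / (6q)` with `J` the all-ones matrix. Rather than developing the spectral
theory, `srgProj_mul_self` verifies `P² = P` from the quadratic equation for `A`.

The off-diagonal entries of `P` are `±1/(6q)`, its diagonal is constant equal to
`(2q+1)/(6q) = N/M`, and its trace is `N = (2q+1)(4q+1)/3`. A symmetric idempotent matrix of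
trace `N` is the Gram matrix of a Parseval frame of `ℝ^N`: project the standard basis to the range
of `P` and identify that range isometrically with `ℝ^N` (`exists_parseval_of_proj`). Scaling the
frame by `√(M/N)` makes its vectors unit vectors.
-/

open scoped RealInnerProductSpace

/-- A symmetric idempotent real matrix of trace `N` is the Gram matrix of a Parseval frame
of `ℝ^N`. -/
theorem exists_parseval_of_proj {V : Type*} [Fintype V] [DecidableEq V] (P : Matrix V V ℝ)
    (hsymm : P.transpose = P) (hidem : P * P = P) (N : ℕ) (htr : P.trace = N) :
    ∃ φ : V → EuclideanSpace ℝ (Fin N),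
      (∀ x y, ⟪φ x, φ y⟫ = P x y) ∧ ∀ ψ, ∑ x, ⟪ψ, φ x⟫ ^ 2 = ‖ψ‖ ^ 2 := by
  set T : EuclideanSpace ℝ V →ₗ[ℝ] EuclideanSpace ℝ V := Matrix.toEuclideanLin P with hT
  have hTT : ∀ u, T (T u) = T u := by
    intro u
    simp [hT, Matrix.toLpLin_apply, Matrix.mulVec_mulVec, hidem]
  have hsym : T.IsSymmetric := by
    rw [hT, Matrix.isSymmetric_toEuclideanLin_iff]
    rw [Matrix.IsHermitian, Matrix.conjTranspose_eq_transpose_of_trivial, hsymm]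
  have hproj : LinearMap.IsProj (LinearMap.range T) T :=
    ⟨fun u => ⟨u, rfl⟩, by rintro _ ⟨u, rfl⟩; exact hTT u⟩
  have hrank : Module.finrank ℝ (LinearMap.range T) = N := by
    have h1 := hproj.trace
    have h2 : LinearMap.trace ℝ _ T = P.trace := by
      rw [hT, Matrix.toEuclideanLin, Matrix.toLpLin_eq_toLin,
        LinearMap.trace_eq_matrix_trace ℝ (PiLp.basisFun 2 ℝ V), LinearMap.toMatrix_toLin]
    rw [h2, htr] at h1
    exact_mod_cast h1.symm
  let L : LinearMap.range T ≃ₗᵢ[ℝ] EuclideanSpace ℝ (Fin N) :=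
    ((stdOrthonormalBasis ℝ (LinearMap.range T)).reindex (finCongr hrank)).repr
  let e : V → EuclideanSpace ℝ V := fun x => EuclideanSpace.single x 1
  refine ⟨fun x => L ⟨T (e x), ⟨e x, rfl⟩⟩, fun x y => ?_, fun ψ => ?_⟩
  · rw [L.inner_map_map, Submodule.coe_inner]
    change ⟪T (e x), T (e y)⟫ = P x y
    rw [hsym, hTT]
    simp [e, hT, EuclideanSpace.inner_single_left, Matrix.toLpLin_apply]
  · obtain ⟨u, rfl⟩ := L.surjective ψ
    have hu : T u.1 = u.1 := hproj.map_id _ u.2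
    have key : ∀ x, ⟪L u, L ⟨T (e x), ⟨e x, rfl⟩⟩⟫ = u.1 x := by
      intro x
      rw [L.inner_map_map, Submodule.coe_inner]
      change ⟪u.1, T (e x)⟫ = _
      rw [← hsym, hu]
      simp [e, EuclideanSpace.inner_single_right]
    simp_rw [key]
    rw [L.norm_map, Submodule.coe_norm, EuclideanSpace.real_norm_sq_eq]

/-- The matrix `(2q I + J - 2A) / (6q)`. When `q = 2^(n-2)` and `A` is the adjacency matrix of the
strongly regular graph under consideration, it is the orthogonal projection onto the
`(-2q)`-eigenspace of `A`. -/
noncomputable def srgProj {V : Type*} [DecidableEq V] (A : Matrix V V ℝ) (q : ℝ) :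
    Matrix V V ℝ :=
  (6 * q)⁻¹ • ((2 * q) • (1 : Matrix V V ℝ) + Matrix.of (fun _ _ => 1) - (2 : ℝ) • A)

theorem srgProj_mul_self {V : Type*} [Fintype V] [DecidableEq V] (G : SimpleGraph V)
    [DecidableRel G.Adj] (q : ℕ) (hq : q ≠ 0)
    (h : G.IsSRGWith (2 * q * (4 * q + 1)) (2 * q * (2 * q + 1)) (q * (2 * q + 1))
      (2 * q * (q + 1))) :
    srgProj (G.adjMatrix ℝ) q * srgProj (G.adjMatrix ℝ) q = srgProj (G.adjMatrix ℝ) q := by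
  have hq' : (q : ℝ) ≠ 0 := by exact_mod_cast hq
  set A := G.adjMatrix ℝ with hA
  set J : Matrix V V ℝ := Matrix.of (fun _ _ => 1) with hJ
  have hAA : A * A = (2 * q ^ 2 : ℝ) • (1 : Matrix V V ℝ) - (q : ℝ) • A
      + (2 * q * (q + 1) : ℝ) • J := by
    rw [← pow_two, hA, h.matrix_eq]
    ext x y
    simp only [Matrix.add_apply, Matrix.sub_apply, Matrix.smul_apply, smul_eq_mul,
      SimpleGraph.adjMatrix_apply, SimpleGraph.compl_adj, Matrix.one_apply, hJ, Matrix.of_apply]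
    simp only [nsmul_eq_mul]
    by_cases hxy : x = y
    · subst hxy
      simp
      ring
    · by_cases ha : G.Adj x y <;> simp [ha, hxy] <;> ring
  have hAJ : A * J = (2 * q * (2 * q + 1) : ℝ) • J := by
    ext x y
    simp [hA, hJ, SimpleGraph.adjMatrix_mul_apply, h.regular x]
  have hJA : J * A = (2 * q * (2 * q + 1) : ℝ) • J := by
    ext x y
    simp [hA, hJ, SimpleGraph.mul_adjMatrix_apply, h.regular y]
  have hJJ : J * J = (2 * q * (4 * q + 1) : ℝ) • J := by
    ext x y
    simp [hJ, Matrix.mul_apply, h.card]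
  have hB : ((2 * q : ℝ) • (1 : Matrix V V ℝ) + J - (2 : ℝ) • A) *
      ((2 * q : ℝ) • (1 : Matrix V V ℝ) + J - (2 : ℝ) • A) =
      (6 * q : ℝ) • ((2 * q : ℝ) • (1 : Matrix V V ℝ) + J - (2 : ℝ) • A) := by
    simp only [mul_add, add_mul, mul_sub, sub_mul, smul_mul_assoc, mul_smul_comm, hAA, hAJ, hJA,
      hJJ, mul_one, one_mul]
    module
  unfold srgProj
  rw [← hJ, smul_mul_assoc, mul_smul_comm, hB, smul_smul (6 * (q : ℝ))⁻¹ (6 * (q : ℝ)),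
    inv_mul_cancel₀ (by positivity), one_smul]

theorem three_dvd_dim (m : ℕ) : 3 ∣ (2 * 2 ^ m + 1) * (4 * 2 ^ m + 1) := by
  have h : 2 ^ m % 3 = 1 ∨ 2 ^ m % 3 = 2 := by
    induction m with
    | zero => simp
    | succ k ih => rw [pow_succ]; omega
  rcases h with h | h
  · exact Dvd.dvd.mul_right (by omega) _
  · exact Dvd.dvd.mul_left (by omega) _

/-- Every strongly regular graph with the parameters of the complement of `NO⁻_{2n}(2)` (`n ≥ 2`) yields a real equiangular tight frame of `M = 2^{n-1}(2^n + 1)` unit vectors in `ℝ^N`, `N = (2^{n-1} + 1)(2^n + 1)/3`, with frame constant `M/N`. -/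
theorem etf_of_srg_NOminusCompl (n : ℕ) (hn : 2 ≤ n) {V : Type*} [Fintype V]
    (G : SimpleGraph V) [DecidableRel G.Adj]
    (h : G.IsSRGWith (2 ^ (n - 1) * (2 ^ n + 1)) (2 ^ (n - 1) * (2 ^ (n - 1) + 1)) (2 ^ (n - 2) * (2 ^ (n - 1) + 1)) (2 ^ (n - 1) * (2 ^ (n - 2) + 1))) :
    ∃ φ : V → EuclideanSpace ℝ (Fin ((2 ^ (n - 1) + 1) * (2 ^ n + 1) / 3)),
      (∀ x : V, ‖φ x‖ = 1) ∧
      (∃ α : ℝ, ∀ x y : V, x ≠ y → |⟪φ x, φ y⟫| = α) ∧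
      (∀ ψ : EuclideanSpace ℝ (Fin ((2 ^ (n - 1) + 1) * (2 ^ n + 1) / 3)),
        ∑ x : V, ⟪ψ, φ x⟫ ^ 2 = (((2 ^ (n - 1) * (2 ^ n + 1) : ℕ) : ℝ) / (((2 ^ (n - 1) + 1) * (2 ^ n + 1) / 3 : ℕ) : ℝ)) * ‖ψ‖ ^ 2) := by
  classical
  obtain ⟨m, rfl⟩ : ∃ m, n = m + 2 := ⟨n - 2, by omega⟩
  have e1 : 2 ^ (m + 2 - 1) = 2 * 2 ^ m := by
    rw [show m + 2 - 1 = m + 1 by omega, pow_succ, mul_comm]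
  have e2 : 2 ^ (m + 2) = 4 * 2 ^ m := by ring
  have e3 : m + 2 - 2 = m := by omega
  have hd := three_dvd_dim m
  have hq : 2 ^ m ≠ 0 := by positivity
  -- The dimension occurs in types, so it is generalized before the powers of two are rewritten.
  generalize hN : (2 ^ (m + 2 - 1) + 1) * (2 ^ (m + 2) + 1) / 3 = N
  simp only [e1, e2, e3] at h hN ⊢
  generalize 2 ^ m = q at *
  have h3N : (3 * N : ℝ) = (2 * q + 1) * (4 * q + 1) := by
    have : 3 * N = (2 * q + 1) * (4 * q + 1) := by omega
    exact_mod_cast this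
  have hq0 : (0 : ℝ) < q := by exact_mod_cast Nat.pos_of_ne_zero hq
  have hN0 : (0 : ℝ) < N := by
    have : (0 : ℝ) < (2 * q + 1) * (4 * q + 1) := by positivity
    linarith
  have hdiag : ∀ x, srgProj (G.adjMatrix ℝ) q x x = (2 * q + 1) / (6 * q) := by
    intro x
    simp [srgProj]
    field_simp
  obtain ⟨φ, hgram, htight⟩ := exists_parseval_of_proj (srgProj (G.adjMatrix ℝ) q)
    (by ext x y; simp [srgProj, Matrix.one_apply, eq_comm, G.adj_comm])
    (srgProj_mul_self G q hq h) N (by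
      simp only [Matrix.trace, Matrix.diag_apply, hdiag, Finset.sum_const, Finset.card_univ,
        h.card, nsmul_eq_mul]
      push_cast
      field_simp
      linarith)
  set R : ℝ := ((2 * q * (4 * q + 1) : ℕ) : ℝ) / N with hR
  have hR0 : 0 ≤ R := by positivity
  have hRdiag : R * ((2 * q + 1) / (6 * q)) = 1 := by
    rw [hR]
    push_cast
    field_simp
    linarith
  have hin : ∀ x y, ⟪√R • φ x, √R • φ y⟫ = R * srgProj (G.adjMatrix ℝ) q x y := by
    intro x y
    rw [real_inner_smul_left, real_inner_smul_right, hgram, ← mul_assoc, Real.mul_self_sqrt hR0]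
  refine ⟨fun x => √R • φ x, fun x => ?_, ⟨R * (6 * q : ℝ)⁻¹, fun x y hxy => ?_⟩, fun ψ => ?_⟩
  · have h1 := hin x x
    rw [hdiag, hRdiag, real_inner_self_eq_norm_sq] at h1
    exact (pow_eq_one_iff_of_nonneg (norm_nonneg _) two_ne_zero).mp h1
  · rw [hin, abs_mul, abs_of_nonneg hR0]
    congr 1
    have hq6 : |(6 * q : ℝ)⁻¹| = (6 * q : ℝ)⁻¹ := abs_of_pos (by positivity)
    by_cases ha : G.Adj x y
    · have : srgProj (G.adjMatrix ℝ) q x y = -(6 * q : ℝ)⁻¹ := by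
        simp [srgProj, hxy, ha]
        ring
      rw [this, abs_neg, hq6]
    · have : srgProj (G.adjMatrix ℝ) q x y = (6 * q : ℝ)⁻¹ := by
        simp [srgProj, hxy, ha]
      rw [this, hq6]
  · simp_rw [real_inner_smul_right, mul_pow, Real.sq_sqrt hR0]
    rw [← Finset.mul_sum, htight]
end

section
/- Let n ≥ 1 and let Γ be any strongly regular graph with parameters (v, k, λ, μ) = (4^n(4^n + 1)/2, (4^{n−1} + 1)(4^n − 1), (4^{n−1} + 2)(4^n − 2)/2, 4^n(4^{n−1} + 1)/2), with vertex set V. Set M = 4^n(4^n + 1)/2 and N = (4^{2n} − 1)/3. Then there exists a family φ : V → EuclideanSpace ℝ (Fin N) of M unit vectors that is equiangular and is a tight frame with frame constant M/N, i.e. Σ_{x ∈ V} ⟨ψ, φ x⟩² = (M/N)‖ψ‖² for all ψ. -/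
/-!
Write `q = 4 ^ n`. The adjacency matrix `A` has smallest eigenvalue `s = -(q / 4 + 1)`, and the
orthogonal projection `P` onto its eigenspace is a multiple of the matrix `Γ` with ones on the
diagonal, `-1 / (q - 1)` at adjacent pairs and `1 / (q - 1)` at non-adjacent pairs, that is,
`Γ = (1 - c) • 1 + c • J - 2 c • A` with `c = 1 / (q - 1)` and `J` the all-ones matrix.

The strongly regular identity `A² = k + λ A + μ (J - 1 - A)` and `A J = J A = k J` give
`Γ² = t Γ` with `t = 3 q / (2 (q - 1)) = M / N` (`gram_sq`), so `P = Γ / t` is a symmetric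
idempotent whose rank is its trace `M / t = N`. Projecting the standard basis of `ℝ^V` to the range
of `P`, identifying this range with `ℝ^N` and scaling by `√t` gives vectors with Gram matrix `Γ`;
they form a tight frame with constant `t` by Parseval's identity (`exists_tight_frame_of_gram`).
-/

open scoped RealInnerProductSpace

/-- A symmetric matrix `Γ` with `Γ² = t Γ`, `t > 0`, and trace `t N` is the Gram matrix of a tight
frame of `ℝ^N` with frame constant `t`. -/
lemma exists_tight_frame_of_gram {V : Type*} [Fintype V] (Γ : Matrix V V ℝ) (t : ℝ) (N : ℕ)
    (ht : 0 < t) (hsymm : Γ.transpose = Γ) (hsq : Γ * Γ = t • Γ) (htr : Γ.trace = t * N) :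
    ∃ φ : V → EuclideanSpace ℝ (Fin N),
      (∀ x y, ⟪φ x, φ y⟫ = Γ x y) ∧ ∀ ψ, ∑ x, ⟪ψ, φ x⟫ ^ 2 = t * ‖ψ‖ ^ 2 := by
  classical
  set P : Matrix V V ℝ := t⁻¹ • Γ with hP
  have hPP : P * P = P := by
    rw [hP, Matrix.smul_mul, Matrix.mul_smul, hsq, smul_smul t⁻¹ t, inv_mul_cancel₀ ht.ne',
      one_smul]
  have hPh : P.IsHermitian := by
    rw [Matrix.IsHermitian, Matrix.conjTranspose_eq_transpose_of_trivial, hP,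
      Matrix.transpose_smul, hsymm]
  set T : EuclideanSpace ℝ V →ₗ[ℝ] EuclideanSpace ℝ V := Matrix.toEuclideanLin P with hT
  have hTs : T.IsSymmetric := Matrix.isSymmetric_toEuclideanLin_iff.mpr hPh
  have hTT : ∀ z, T (T z) = T z := by
    intro z
    rw [hT, ← LinearMap.comp_apply, ← Matrix.toLpLin_mul, hPP]
  have hproj : LinearMap.IsProj (LinearMap.range T) T := by
    refine ⟨fun z => ⟨z, rfl⟩, ?_⟩
    rintro _ ⟨z, rfl⟩
    exact hTT z
  have hrank : Module.finrank ℝ (LinearMap.range T) = N := by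
    have h1 := hproj.trace
    have h2 : LinearMap.trace ℝ _ T = P.trace := by
      have h3 : T = Matrix.toLin (PiLp.basisFun 2 ℝ V) (PiLp.basisFun 2 ℝ V) P :=
        congrArg (fun f => f P) (Matrix.toLpLin_eq_toLin 2 2)
      rw [h3, Matrix.trace_toLin_eq]
    rw [h2, hP, Matrix.trace_smul, htr, smul_eq_mul, inv_mul_cancel_left₀ ht.ne'] at h1
    exact_mod_cast h1.symm
  let u : LinearMap.range T ≃ₗᵢ[ℝ] EuclideanSpace ℝ (Fin N) :=
    ((stdOrthonormalBasis ℝ (LinearMap.range T)).reindex (finCongr hrank)).repr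
  let e : V → EuclideanSpace ℝ V := fun x => EuclideanSpace.single x 1
  have hs : Real.sqrt t * Real.sqrt t = t := Real.mul_self_sqrt ht.le
  refine ⟨fun x => Real.sqrt t • u ⟨T (e x), ⟨e x, rfl⟩⟩, ?_, ?_⟩
  · intro x y
    have h1 : ⟪T (e x), T (e y)⟫ = P x y := by
      rw [hTs (e x), hTT]
      simp [e, hT, EuclideanSpace.inner_single_left]
    rw [real_inner_smul_left, real_inner_smul_right, u.inner_map_map, Submodule.coe_inner, h1,
      ← mul_assoc, hs, hP, Matrix.smul_apply, smul_eq_mul, mul_inv_cancel_left₀ ht.ne']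
  · intro ψ
    obtain ⟨z, rfl⟩ := u.surjective ψ
    obtain ⟨z, w, rfl⟩ := z
    have h1 : ∀ x, ⟪T w, T (e x)⟫ = (T w) x := by
      intro x
      rw [← hTs (T w), hTT]
      simp [e, EuclideanSpace.inner_single_right]
    simp only [real_inner_smul_right, u.inner_map_map, Submodule.coe_inner, h1, mul_pow,
      u.norm_map, Real.sq_sqrt ht.le]
    rw [← Finset.mul_sum, Submodule.coe_norm, EuclideanSpace.real_norm_sq_eq]

/-- For a strongly regular graph, the square of `a • 1 + c • J - 2 c • A` is `t` times itself as
soon as the coefficients of `1`, `A` and `J` agree. -/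
lemma gram_sq {V : Type*} [Fintype V] [DecidableEq V] (G : SimpleGraph V) [DecidableRel G.Adj]
    {v k l m : ℕ} (h : G.IsSRGWith v k l m) (a c t : ℝ)
    (h1 : a ^ 2 + 4 * c ^ 2 * (k - m) = t * a)
    (hA : 4 * c ^ 2 * (l - m) - 4 * a * c = -(2 * c * t))
    (hJ : c ^ 2 * v + 4 * c ^ 2 * m + 2 * a * c - 4 * c ^ 2 * k = c * t) :
    let Γ : Matrix V V ℝ := a • 1 + c • Matrix.of 1 - (2 * c) • G.adjMatrix ℝ
    Γ * Γ = t • Γ := by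
  intro Γ
  set A := G.adjMatrix ℝ with hAdef
  set J : Matrix V V ℝ := Matrix.of 1 with hJdef
  have hAA : A * A = (k : ℝ) • (1 : Matrix V V ℝ) + (l : ℝ) • A + (m : ℝ) • (J - 1 - A) := by
    have h2 := h.matrix_eq (α := ℝ)
    have h3 : (Gᶜ).adjMatrix ℝ = J - 1 - A := by
      have h4 := G.one_add_adjMatrix_add_compl_adjMatrix_eq_of_one ℝ
      rw [G.compl_adjMatrix_eq_adjMatrix_compl ℝ] at h4
      rw [hJdef, ← h4, hAdef]
      abel
    rw [h3, pow_two] at h2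
    simpa only [Nat.cast_smul_eq_nsmul] using h2
  have hAJ : A * J = (k : ℝ) • J := by
    ext x y
    simp [hAdef, hJdef, h.regular x]
  have hJA : J * A = (k : ℝ) • J := by
    ext x y
    simp [hAdef, hJdef, h.regular y]
  have hJJ : J * J = (v : ℝ) • J := by
    ext x y
    simp [hJdef, Matrix.mul_apply, h.card]
  have hexp : Γ * Γ = (a ^ 2) • (1 : Matrix V V ℝ) + (c ^ 2) • (J * J) + (4 * c ^ 2) • (A * A)
      + (2 * a * c) • J - (4 * a * c) • A - (2 * c ^ 2) • (A * J) - (2 * c ^ 2) • (J * A) := by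
    simp only [Γ, add_mul, mul_add, sub_mul, mul_sub, Matrix.smul_mul, Matrix.mul_smul,
      Matrix.one_mul, Matrix.mul_one]
    module
  rw [hexp, hAA, hAJ, hJA, hJJ]
  have e1 : (a ^ 2) • (1 : Matrix V V ℝ) + (c ^ 2) • ((v : ℝ) • J)
      + (4 * c ^ 2) • ((k : ℝ) • (1 : Matrix V V ℝ) + (l : ℝ) • A + (m : ℝ) • (J - 1 - A))
      + (2 * a * c) • J - (4 * a * c) • A - (2 * c ^ 2) • ((k : ℝ) • J)
      - (2 * c ^ 2) • ((k : ℝ) • J)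
      = (a ^ 2 + 4 * c ^ 2 * (k - m)) • (1 : Matrix V V ℝ)
        + (4 * c ^ 2 * (l - m) - 4 * a * c) • A
        + (c ^ 2 * v + 4 * c ^ 2 * m + 2 * a * c - 4 * c ^ 2 * k) • J := by
    module
  rw [e1, h1, hA, hJ]
  simp only [Γ]
  module

/-- Every strongly regular graph with the parameters of `NO⁺_{2n+1}(4)` (`n ≥ 1`) yields a real equiangular tight frame of `M = 4^n(4^n + 1)/2` unit vectors in `ℝ^N`, `N = (4^{2n} - 1)/3`, with frame constant `M/N`. -/
theorem etf_of_srg_NOplusOdd (n : ℕ) (hn : 1 ≤ n) {V : Type*} [Fintype V]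
    (G : SimpleGraph V) [DecidableRel G.Adj]
    (h : G.IsSRGWith (4 ^ n * (4 ^ n + 1) / 2) ((4 ^ (n - 1) + 1) * (4 ^ n - 1)) ((4 ^ (n - 1) + 2) * (4 ^ n - 2) / 2) (4 ^ n * (4 ^ (n - 1) + 1) / 2)) :
    ∃ φ : V → EuclideanSpace ℝ (Fin ((4 ^ (2 * n) - 1) / 3)),
      (∀ x : V, ‖φ x‖ = 1) ∧
      (∃ α : ℝ, ∀ x y : V, x ≠ y → |⟪φ x, φ y⟫| = α) ∧
      (∀ ψ : EuclideanSpace ℝ (Fin ((4 ^ (2 * n) - 1) / 3)),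
        ∑ x : V, ⟪ψ, φ x⟫ ^ 2 = (((4 ^ n * (4 ^ n + 1) / 2 : ℕ) : ℝ) / (((4 ^ (2 * n) - 1) / 3 : ℕ) : ℝ)) * ‖ψ‖ ^ 2) := by
  classical
  obtain ⟨n, rfl⟩ : ∃ m, n = m + 1 := ⟨n - 1, by omega⟩
  -- With `p = 4 ^ (n - 1)`, the parameters are polynomials in `p` without division, except `N`.
  obtain ⟨p, hp⟩ : ∃ p, p = 4 ^ n := ⟨_, rfl⟩
  have hp1 : 1 ≤ p := hp ▸ Nat.one_le_pow _ _ (by norm_num)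
  have hq : 4 ^ (n + 1) = 4 * p := by rw [hp, pow_succ]; ring
  have hq2 : 4 ^ (2 * (n + 1)) = 16 * p ^ 2 := by rw [hp]; ring
  have hv : 4 * p * (4 * p + 1) / 2 = 2 * p * (4 * p + 1) := by
    rw [show 4 * p * (4 * p + 1) = 2 * (2 * p * (4 * p + 1)) by ring]; omega
  have hl : (p + 2) * (4 * p - 2) / 2 = (p + 2) * (2 * p - 1) := by
    rw [show 4 * p - 2 = 2 * (2 * p - 1) by omega,
      show (p + 2) * (2 * (2 * p - 1)) = 2 * ((p + 2) * (2 * p - 1)) by ring]; omega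
  have hm : 4 * p * (p + 1) / 2 = 2 * p * (p + 1) := by
    rw [show 4 * p * (p + 1) = 2 * (2 * p * (p + 1)) by ring]; omega
  have hN : 3 * ((16 * p ^ 2 - 1) / 3) + 1 = 16 * p ^ 2 := by
    have hmod : p % 3 = 1 := by rw [hp, Nat.pow_mod]; simp
    have h3 : p ^ 2 % 3 = 1 := by rw [Nat.pow_mod, hmod]
    have : 1 ≤ p ^ 2 := Nat.one_le_pow _ _ hp1
    omega
  rw [Nat.add_sub_cancel, hq, ← hp, hv, hl, hm] at h
  rw [hq, hq2, hv]
  generalize (16 * p ^ 2 - 1) / 3 = N at hN ⊢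
  have hp1' : (1 : ℝ) ≤ p := by exact_mod_cast hp1
  have hNr : (N : ℝ) = (4 * p - 1) * (4 * p + 1) / 3 := by
    have : (3 * N + 1 : ℝ) = 16 * p ^ 2 := by exact_mod_cast hN
    linarith
  have hd : (0 : ℝ) < 4 * p - 1 := by linarith
  have hd2 : (0 : ℝ) < 4 * p + 1 := by linarith
  have hc4 : ((4 * p - 1 : ℕ) : ℝ) = 4 * p - 1 := by
    rw [Nat.cast_sub (by omega)]; push_cast; ring
  have hc2 : ((2 * p - 1 : ℕ) : ℝ) = 2 * p - 1 := by
    rw [Nat.cast_sub (by omega)]; push_cast; ring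
  have htN : ((2 * p * (4 * p + 1) : ℕ) : ℝ) / N = 6 * p / (4 * p - 1) := by
    rw [hNr]; push_cast; field_simp; ring
  set c : ℝ := 1 / (4 * p - 1) with hc
  have hsq := gram_sq G h (1 - c) c (6 * p / (4 * p - 1))
    (by push_cast [hc4, hc2]; rw [hc]; field_simp; ring)
    (by push_cast [hc4, hc2]; rw [hc]; field_simp; ring)
    (by push_cast [hc4, hc2]; rw [hc]; field_simp; ring)
  obtain ⟨φ, hφ, hψ⟩ := exists_tight_frame_of_gram _ (6 * p / (4 * p - 1) : ℝ) N
    (by positivity) (by simp; rfl) hsq (by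
      have hcancel : (6 * p / (4 * p - 1) : ℝ) * N = 2 * p * (4 * p + 1) := by
        rw [hNr, div_mul_eq_mul_div, div_eq_iff hd.ne']; ring
      rw [hcancel]
      simp [Matrix.trace, h.card])
  refine ⟨φ, fun x => ?_, ⟨c, fun x y hxy => ?_⟩, fun ψ => ?_⟩
  · have h1 : ‖φ x‖ ^ 2 = 1 := by
      rw [← real_inner_self_eq_norm_sq, hφ]
      simp
    exact (pow_eq_one_iff_of_nonneg (norm_nonneg _) two_ne_zero).mp h1
  · have hc0 : 0 ≤ c := by positivity
    rw [hφ]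
    by_cases ha : G.Adj x y
    · simp [hxy, ha]
      rw [show c - 2 * c = -c by ring, abs_neg, abs_of_nonneg hc0]
    · simp [hxy, ha, abs_of_nonneg hc0]
  · rw [hψ, htN]
end

section
/- Let n ≥ 2 and let Γ be any strongly regular graph with parameters (v, k, λ, μ) = (4^n(4^n − 1)/2, 4^{n−1}(4^n + 1), 4^n(4^{n−1} + 1)/2, 4^{n−1}(4^n + 2)/2), with vertex set V. Set M = 4^n(4^n − 1)/2 and N = (4^{2n} − 1)/3. Then there exists a family φ : V → EuclideanSpace ℝ (Fin N) of M unit vectors that is equiangular and is a tight frame with frame constant M/N, i.e. Σ_{x ∈ V} ⟨ψ, φ x⟩² = (M/N)‖ψ‖² for all ψ. -/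
/-!
Write `q = 4 ^ n = 4 t` and let `A`, `J` be the adjacency matrix and the all-ones matrix. The
nontrivial eigenvalues of the graph are `q / 2` and `-q / 4`, and the orthogonal projection onto the
`-q / 4`-eigenspace is a positive multiple of `Q = 1 + (J - 1 - 2 A) / (q + 1)`. This matrix has unit
diagonal and off-diagonal entries `± 1 / (q + 1)`, so it is the Gram matrix of an equiangular family.

No spectral theory is needed: the relation `A ^ 2 = k + ℓ A + μ (J - 1 - A)` and regularity give
`Q ^ 2 = c Q` with `c = 3 q / (2 (q + 1)) = M / N` (`gram_mul_self`). Hence `Q / c` is an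
orthogonal projection, of rank `trace (Q / c) = M / c = N`, and projecting the standard basis onto
its range, scaled by `√c`, gives a tight frame in dimension `N` with Gram matrix `Q`
(`exists_tightFrame_of_gram`).
-/

open scoped RealInnerProductSpace

/-- A real symmetric matrix `Q` with `Q ^ 2 = c Q`, `c > 0`, and trace `c N` is the Gram matrix of a
tight frame in `ℝ ^ N` with frame constant `c`. -/
theorem exists_tightFrame_of_gram {V : Type*} [Fintype V] [DecidableEq V] (Q : Matrix V V ℝ)
    (hsymm : Q.IsSymm) (c : ℝ) (hc : 0 < c) (hQ : Q * Q = c • Q) (N : ℕ)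
    (htr : Q.trace = c * N) :
    ∃ φ : V → EuclideanSpace ℝ (Fin N), (∀ x y, ⟪φ x, φ y⟫ = Q x y) ∧
      ∀ ψ : EuclideanSpace ℝ (Fin N), ∑ x, ⟪ψ, φ x⟫ ^ 2 = c * ‖ψ‖ ^ 2 := by
  set T : EuclideanSpace ℝ V →ₗ[ℝ] EuclideanSpace ℝ V := Matrix.toEuclideanLin (c⁻¹ • Q) with hT
  have hTT : ∀ v, T (T v) = T v := by
    intro v
    simp only [hT, Matrix.toLpLin_apply, Matrix.mulVec_mulVec]
    congr 2
    rw [Matrix.smul_mul, Matrix.mul_smul, hQ]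
    simp [smul_smul, hc.ne']
  have hproj : LinearMap.IsProj (LinearMap.range T) T :=
    ⟨fun x => LinearMap.mem_range_self T x, by rintro _ ⟨y, rfl⟩; exact hTT y⟩
  have hfin : Module.finrank ℝ (LinearMap.range T) = N := by
    have h1 := hproj.trace
    have h2 : LinearMap.trace ℝ _ T = (c⁻¹ • Q).trace :=
      Matrix.trace_toLin_eq (c⁻¹ • Q) (PiLp.basisFun 2 ℝ V)
    rw [h2, Matrix.trace_smul, htr, smul_eq_mul, inv_mul_cancel_left₀ hc.ne'] at h1
    exact_mod_cast h1.symm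
  have hTsymm : ∀ u v, ⟪T u, v⟫ = ⟪u, T v⟫ := by
    have : (c⁻¹ • Q).IsHermitian := by
      rw [Matrix.IsHermitian, Matrix.conjTranspose_eq_transpose_of_trivial, Matrix.transpose_smul,
        hsymm.eq]
    exact Matrix.isSymmetric_toEuclideanLin_iff.mpr this
  let b : OrthonormalBasis (Fin N) ℝ (LinearMap.range T) :=
    (stdOrthonormalBasis ℝ (LinearMap.range T)).reindex (finCongr hfin)
  let e : V → EuclideanSpace ℝ V := fun x => EuclideanSpace.single x 1
  let p : V → LinearMap.range T := fun x => ⟨T (e x), LinearMap.mem_range_self T _⟩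
  have hs : √c * √c = c := Real.mul_self_sqrt hc.le
  have key : ∀ (w : LinearMap.range T) (x : V), ⟪w, p x⟫ = (w : EuclideanSpace ℝ V) x := by
    intro w x
    have hw : T (w : EuclideanSpace ℝ V) = w := hproj.map_id _ w.2
    rw [Submodule.coe_inner, ← hTsymm, hw]
    simp [e, EuclideanSpace.inner_single_right]
  refine ⟨fun x => √c • b.repr (p x), fun x y => ?_, fun ψ => ?_⟩
  · rw [real_inner_smul_left, real_inner_smul_right, LinearIsometryEquiv.inner_map_map, key]
    have : (T (e x)) y = c⁻¹ * Q x y := by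
      simp [hT, e, Matrix.toLpLin_apply, hsymm.apply x y]
    change √c * (√c * (T (e x)) y) = _
    rw [← mul_assoc, hs, this, mul_inv_cancel_left₀ hc.ne']
  · obtain ⟨w, rfl⟩ := b.repr.surjective ψ
    simp only [real_inner_smul_right, LinearIsometryEquiv.inner_map_map, key,
      LinearIsometryEquiv.norm_map, mul_pow, ← Finset.mul_sum]
    rw [Real.sq_sqrt hc.le, Submodule.coe_norm, EuclideanSpace.real_norm_sq_eq]

/-- The quadratic relation satisfied by the Gram matrix, with `t = 4 ^ (n - 1)`. -/
theorem gram_mul_self {V : Type*} [Fintype V] [DecidableEq V] (A J : Matrix V V ℝ) (t : ℝ)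
    (ht : 0 < t) (hJJ : J * J = (2 * t * (4 * t - 1)) • J)
    (hAJ : A * J = (t * (4 * t + 1)) • J) (hJA : J * A = (t * (4 * t + 1)) • J)
    (hAA : A * A = (t * (4 * t + 1)) • (1 : Matrix V V ℝ) + (2 * t * (t + 1)) • A
      + (t * (2 * t + 1)) • (J - 1 - A)) :
    (1 + (4 * t + 1)⁻¹ • (J - 1 - (2 : ℝ) • A)) * (1 + (4 * t + 1)⁻¹ • (J - 1 - (2 : ℝ) • A)) =
      (6 * t / (4 * t + 1)) • (1 + (4 * t + 1)⁻¹ • (J - 1 - (2 : ℝ) • A)) := by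
  have h4 : 4 * t + 1 ≠ 0 := by positivity
  simp only [add_mul, mul_add, sub_mul, mul_sub, Matrix.smul_mul, Matrix.mul_smul, hJJ, hAJ, hJA,
    hAA, one_mul, mul_one]
  match_scalars <;> field_simp <;> ring

/-- Every strongly regular graph with the parameters of the complement of `NO⁻_{2n+1}(4)` (`n ≥ 2`) yields a real equiangular tight frame of `M = 4^n(4^n - 1)/2` unit vectors in `ℝ^N`, `N = (4^{2n} - 1)/3`, with frame constant `M/N`. -/
theorem etf_of_srg_NOminusOddCompl (n : ℕ) (hn : 2 ≤ n) {V : Type*} [Fintype V]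
    (G : SimpleGraph V) [DecidableRel G.Adj]
    (h : G.IsSRGWith (4 ^ n * (4 ^ n - 1) / 2) (4 ^ (n - 1) * (4 ^ n + 1)) (4 ^ n * (4 ^ (n - 1) + 1) / 2) (4 ^ (n - 1) * (4 ^ n + 2) / 2)) :
    ∃ φ : V → EuclideanSpace ℝ (Fin ((4 ^ (2 * n) - 1) / 3)),
      (∀ x : V, ‖φ x‖ = 1) ∧
      (∃ α : ℝ, ∀ x y : V, x ≠ y → |⟪φ x, φ y⟫| = α) ∧
      (∀ ψ : EuclideanSpace ℝ (Fin ((4 ^ (2 * n) - 1) / 3)),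
        ∑ x : V, ⟪ψ, φ x⟫ ^ 2 = (((4 ^ n * (4 ^ n - 1) / 2 : ℕ) : ℝ) / (((4 ^ (2 * n) - 1) / 3 : ℕ) : ℝ)) * ‖ψ‖ ^ 2) := by
  classical
  obtain ⟨m, rfl⟩ : ∃ m, n = m + 1 := ⟨n - 1, by omega⟩
  obtain ⟨t, ht⟩ : ∃ t, t = 4 ^ m := ⟨_, rfl⟩
  have ht1 : 1 ≤ t := ht ▸ Nat.one_le_pow _ _ (by norm_num)
  have hv : 4 ^ (m + 1) * (4 ^ (m + 1) - 1) / 2 = 2 * t * (4 * t - 1) := by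
    rw [pow_succ, ← ht, show t * 4 * (t * 4 - 1) = 2 * (2 * t * (4 * t - 1)) by
      rw [mul_comm t 4]; ring]
    simp
  have hk : 4 ^ (m + 1 - 1) * (4 ^ (m + 1) + 1) = t * (4 * t + 1) := by
    rw [Nat.add_sub_cancel, pow_succ, ← ht]; ring
  have hl : 4 ^ (m + 1) * (4 ^ (m + 1 - 1) + 1) / 2 = 2 * t * (t + 1) := by
    rw [Nat.add_sub_cancel, pow_succ, ← ht, show t * 4 * (t + 1) = 2 * (2 * t * (t + 1)) by ring]
    simp
  have hμ : 4 ^ (m + 1 - 1) * (4 ^ (m + 1) + 2) / 2 = t * (2 * t + 1) := by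
    rw [Nat.add_sub_cancel, pow_succ, ← ht, show t * (t * 4 + 2) = 2 * (t * (2 * t + 1)) by ring]
    simp
  have hN3 : 3 * ((4 ^ (2 * (m + 1)) - 1) / 3) + 1 = 16 * t ^ 2 := by
    have hp : 4 ^ (2 * (m + 1)) = 16 * t ^ 2 := by rw [ht]; ring
    have hmod : 4 ^ (2 * (m + 1)) % 3 = 1 := by simp [Nat.pow_mod]
    rw [← hp]; omega
  rw [hv, hk, hl, hμ] at h
  rw [hv]
  generalize (4 ^ (2 * (m + 1)) - 1) / 3 = N at hN3 ⊢
  have hNR : 3 * (N : ℝ) + 1 = 16 * (t : ℝ) ^ 2 := by exact_mod_cast hN3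
  have htR : (1 : ℝ) ≤ t := by exact_mod_cast ht1
  have hvR : ((2 * t * (4 * t - 1) : ℕ) : ℝ) = 2 * t * (4 * t - 1) := by
    rw [Nat.cast_mul, Nat.cast_sub (by omega)]; push_cast; ring
  set A := G.adjMatrix ℝ with hA
  set J : Matrix V V ℝ := Matrix.of 1 with hJ
  have hcompl : Gᶜ.adjMatrix ℝ = J - 1 - A := by
    rw [← SimpleGraph.compl_adjMatrix_eq_adjMatrix_compl,
      hJ, ← G.one_add_adjMatrix_add_compl_adjMatrix_eq_of_one ℝ]
    abel
  have hAA := h.matrix_eq (α := ℝ)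
  rw [hcompl, ← hA, sq] at hAA
  simp only [← Nat.cast_smul_eq_nsmul ℝ] at hAA
  push_cast at hAA
  have hdeg : ∀ x, (G.degree x : ℝ) = t * (4 * t + 1) := fun x => by
    rw [h.regular x]; push_cast; ring
  have hJJ : J * J = (2 * (t : ℝ) * (4 * t - 1)) • J := by
    ext x y
    simp [hJ, Matrix.mul_apply, h.card, hvR]
  have hAJ : A * J = ((t : ℝ) * (4 * t + 1)) • J := by
    ext x y
    simp [hJ, hA, hdeg]
  have hJA : J * A = ((t : ℝ) * (4 * t + 1)) • J := by
    ext x y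
    simp [hJ, hA, hdeg]
  have hQ := gram_mul_self A J t (by linarith) hJJ hAJ hJA hAA
  set Q := 1 + (4 * (t : ℝ) + 1)⁻¹ • (J - 1 - (2 : ℝ) • A) with hQdef
  have hdiag : ∀ x, Q x x = 1 := fun x => by simp [hQdef, hJ, hA]
  have hoff : ∀ x y, x ≠ y → |Q x y| = (4 * (t : ℝ) + 1)⁻¹ := by
    intro x y hxy
    have hpos : 0 ≤ (4 * (t : ℝ) + 1)⁻¹ := by positivity
    by_cases hadj : G.Adj x y
    · simp only [hQdef, hJ, hA, Matrix.add_apply, Matrix.smul_apply, Matrix.sub_apply,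
        Matrix.one_apply_ne hxy, Matrix.of_apply, Pi.one_apply, SimpleGraph.adjMatrix_apply, hadj,
        if_true, smul_eq_mul]
      rw [show 0 + (4 * (t : ℝ) + 1)⁻¹ * (1 - 0 - 2 * 1) = -(4 * (t : ℝ) + 1)⁻¹ by ring, abs_neg,
        abs_of_nonneg hpos]
    · simp [hQdef, hJ, hA, hxy, hadj, abs_of_nonneg hpos]
  have hsymm : Q.IsSymm := by
    ext x y
    simp [hQdef, hJ, hA, Matrix.one_apply, SimpleGraph.adj_comm, eq_comm]
  have hc : 6 * (t : ℝ) / (4 * t + 1) = ((2 * t * (4 * t - 1) : ℕ) : ℝ) / N := by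
    have hN0 : (N : ℝ) ≠ 0 := by nlinarith
    rw [hvR, div_eq_div_iff (by positivity) hN0]
    linear_combination 2 * (t : ℝ) * hNR
  have hc0 : 0 < 6 * (t : ℝ) / (4 * t + 1) := by positivity
  have htr : Q.trace = 6 * (t : ℝ) / (4 * t + 1) * N := by
    have hN0 : (N : ℝ) ≠ 0 := by nlinarith
    rw [hc, div_mul_cancel₀ _ hN0]
    simp [Matrix.trace, hdiag, h.card]
  obtain ⟨φ, hφ, hframe⟩ := exists_tightFrame_of_gram Q hsymm _ hc0 hQ N htr
  refine ⟨φ, fun x => ?_, ⟨(4 * (t : ℝ) + 1)⁻¹, fun x y hxy => ?_⟩, fun ψ => ?_⟩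
  · rw [norm_eq_sqrt_real_inner, hφ, hdiag, Real.sqrt_one]
  · rw [hφ, hoff x y hxy]
  · rw [hframe, hc]
end

section
/- Let n ≥ 2 and let Γ be any strongly regular graph with parameters (v, k, λ, μ) = (2^{2n}, (2^{n−1} + 1)(2^n − 1), (2^{n−1} + 2)(2^{n−1} − 1), 2^{n−1}(2^{n−1} + 1)), with vertex set V. Set M = 2^{2n} and N = 2^{n−1}(2^n − 1). Then there exists a family φ : V → EuclideanSpace ℝ (Fin N) of M unit vectors that is equiangular and is a tight frame with frame constant M/N, i.e. Σ_{x ∈ V} ⟨ψ, φ x⟩² = (M/N)‖ψ‖² for all ψ. -/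
/-!
Write `q = 2 ^ (n - 1)`, let `A` be the adjacency matrix of `G` and `J` the all-ones matrix.
The matrix `S = 2A + 2I - J` is symmetric, has all its entries equal to `±1` and `1` on the
diagonal. The strongly regular relation `A² = kI + λA + μ(J - I - A)`, together with `AJ = JA = kJ`,
gives `S² = 4q² I` for the parameters at hand (`S` is a regular symmetric Hadamard matrix;
`srgSign_mul_self`). Hence `P = (I - S / (2q)) / 2` is a symmetric idempotent matrix of trace
`2q² - q = N`, so an orthogonal projection of rank `N`.

The columns of a rank-`N` orthogonal projection, written in an orthonormal basis of its range,
form a Parseval frame of `ℝ^N` with Gram matrix `P` (`exists_parseval_frame_of_projection`).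
The diagonal of `P` is constantly `N / M` and its off-diagonal entries are `±1 / (4q)`, so rescaling
by `√(M / N)` gives the equiangular tight frame.
-/

open scoped RealInnerProductSpace

/-- A symmetric idempotent real matrix of trace `N` is the Gram matrix of a Parseval frame of
`ℝ^N`: the vectors are the columns of `P`, in coordinates of an orthonormal basis of the range. -/
lemma exists_parseval_frame_of_projection {V : Type*} [Fintype V] [DecidableEq V]
    (P : Matrix V V ℝ) (N : ℕ) (hsymm : P.transpose = P) (hidem : P * P = P)
    (htr : P.trace = N) :
    ∃ φ : V → EuclideanSpace ℝ (Fin N),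
      (∀ x y : V, ⟪φ x, φ y⟫ = P x y) ∧
      (∀ ψ : EuclideanSpace ℝ (Fin N), ∑ x : V, ⟪ψ, φ x⟫ ^ 2 = ‖ψ‖ ^ 2) := by
  set T : EuclideanSpace ℝ V →ₗ[ℝ] EuclideanSpace ℝ V := Matrix.toEuclideanLin P with hT
  have hTT : IsIdempotentElem T := by
    have := Matrix.toLpLin_mul_same 2 P P
    rw [hidem] at this
    exact this.symm
  have hTs : T.IsSymmetric := by
    rw [hT, Matrix.isSymmetric_toEuclideanLin_iff]
    simpa [Matrix.IsHermitian, Matrix.conjTranspose_eq_transpose_of_trivial] using hsymm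
  have hTapp : ∀ x y : V, T (EuclideanSpace.single y 1) x = P x y := by
    intro x y
    simp [hT, EuclideanSpace.single]
  have hproj := LinearMap.IsIdempotentElem.isProj_range T hTT
  have htrace : LinearMap.trace ℝ _ T = P.trace := by
    rw [LinearMap.trace_eq_matrix_trace ℝ (EuclideanSpace.basisFun V ℝ).toBasis T]
    congr 1
    ext i j
    simp [LinearMap.toMatrix_apply, hTapp]
  have hrank : Module.finrank ℝ (LinearMap.range T) = N := by
    have h1 := hproj.trace
    rw [htrace, htr] at h1
    exact_mod_cast h1.symm
  let b := (stdOrthonormalBasis ℝ (LinearMap.range T)).reindex (finCongr hrank)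
  refine ⟨fun x => b.repr ⟨T (EuclideanSpace.single x 1), LinearMap.mem_range_self _ _⟩,
    fun x y => ?_, fun ψ => ?_⟩
  · rw [LinearIsometryEquiv.inner_map_map, Submodule.coe_inner, hTs, ← Module.End.mul_apply,
      hTT.eq, EuclideanSpace.inner_single_left]
    simp [hTapp]
  · obtain ⟨u, rfl⟩ := b.repr.surjective ψ
    have hfix : T (u : EuclideanSpace ℝ V) = u := hproj.map_id _ u.2
    have hcoord : ∀ x : V, ⟪b.repr u,
        b.repr ⟨T (EuclideanSpace.single x 1), LinearMap.mem_range_self _ _⟩⟫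
          = (u : EuclideanSpace ℝ V) x := by
      intro x
      rw [LinearIsometryEquiv.inner_map_map, Submodule.coe_inner, ← hTs, hfix,
        EuclideanSpace.inner_single_right]
      simp
    simp only [hcoord, LinearIsometryEquiv.norm_map]
    rw [Submodule.coe_norm, EuclideanSpace.real_norm_sq_eq]

/-- The matrix `2A + 2I - J`, with entry `1` on the diagonal and at adjacent pairs, and `-1` at
distinct non-adjacent pairs. -/
def srgSign {V : Type*} [DecidableEq V] (G : SimpleGraph V) [DecidableRel G.Adj] :
    Matrix V V ℝ :=
  (2 : ℝ) • G.adjMatrix ℝ + (2 : ℝ) • (1 : Matrix V V ℝ) - Matrix.of fun _ _ => 1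

/-- The sign matrix is Hadamard. The natural-number parameters are given through their real values so that no truncated
subtraction appears. -/
lemma srgSign_mul_self {V : Type*} [Fintype V] [DecidableEq V] (G : SimpleGraph V)
    [DecidableRel G.Adj] {v k l m : ℕ} (h : G.IsSRGWith v k l m) (q : ℝ)
    (hv : (v : ℝ) = 4 * q ^ 2) (hk : (k : ℝ) = (q + 1) * (2 * q - 1))
    (hl : (l : ℝ) = (q + 2) * (q - 1)) (hm : (m : ℝ) = q * (q + 1)) :
    srgSign G * srgSign G = (4 * q ^ 2) • (1 : Matrix V V ℝ) := by
  set A := G.adjMatrix ℝ with hA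
  set J : Matrix V V ℝ := Matrix.of fun _ _ => 1 with hJ
  have hdeg : ∀ i, (G.degree i : ℝ) = k := fun i => by rw [h.regular i]
  have hAJ : A * J = (k : ℝ) • J := by
    ext i j
    simp [hA, hJ, hdeg]
  have hJA : J * A = (k : ℝ) • J := by
    ext i j
    simp [hA, hJ, hdeg]
  have hJJ : J * J = (v : ℝ) • J := by
    ext i j
    simp [hJ, Matrix.mul_apply, h.card]
  have hC : Gᶜ.adjMatrix ℝ = J - 1 - A := by
    ext i j
    by_cases hij : i = j
    · subst hij
      simp [hJ, hA]
    · by_cases ha : G.Adj i j <;> simp [hJ, hA, hij, ha]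
  have hAA : A * A = (k : ℝ) • (1 : Matrix V V ℝ) + (l : ℝ) • A + (m : ℝ) • (J - 1 - A) := by
    have := h.matrix_eq (α := ℝ)
    rw [pow_two, hC] at this
    simpa only [Nat.cast_smul_eq_nsmul] using this
  have hexp : srgSign G * srgSign G = (4 : ℝ) • (A * A) + (8 : ℝ) • A
      + (4 : ℝ) • (1 : Matrix V V ℝ) - (2 : ℝ) • (A * J) - (2 : ℝ) • (J * A) - (4 : ℝ) • J
      + J * J := by
    have : srgSign G = (2 : ℝ) • A + (2 : ℝ) • (1 : Matrix V V ℝ) - J := rfl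
    rw [this]
    simp only [mul_add, add_mul, mul_sub, sub_mul, Matrix.smul_mul, Matrix.mul_smul, mul_one,
      one_mul]
    module
  rw [hexp, hAJ, hJA, hJJ, hAA, hv, hk, hl, hm]
  module

/-- Every strongly regular graph with the parameters of `VO⁺_{2n}(2)` (`n ≥ 2`) yields a real equiangular tight frame of `M = 2^{2n}` unit vectors in `ℝ^N`, `N = 2^{n-1}(2^n - 1)`, with frame constant `M/N`. -/
theorem etf_of_srg_VOplus (n : ℕ) (hn : 2 ≤ n) {V : Type*} [Fintype V]
    (G : SimpleGraph V) [DecidableRel G.Adj]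
    (h : G.IsSRGWith (2 ^ (2 * n)) ((2 ^ (n - 1) + 1) * (2 ^ n - 1)) ((2 ^ (n - 1) + 2) * (2 ^ (n - 1) - 1)) (2 ^ (n - 1) * (2 ^ (n - 1) + 1))) :
    ∃ φ : V → EuclideanSpace ℝ (Fin (2 ^ (n - 1) * (2 ^ n - 1))),
      (∀ x : V, ‖φ x‖ = 1) ∧
      (∃ α : ℝ, ∀ x y : V, x ≠ y → |⟪φ x, φ y⟫| = α) ∧
      (∀ ψ : EuclideanSpace ℝ (Fin (2 ^ (n - 1) * (2 ^ n - 1))),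
        ∑ x : V, ⟪ψ, φ x⟫ ^ 2 = (((2 ^ (2 * n) : ℕ) : ℝ) / ((2 ^ (n - 1) * (2 ^ n - 1) : ℕ) : ℝ)) * ‖ψ‖ ^ 2) := by
  classical
  set q : ℝ := 2 ^ (n - 1) with hq
  have hq1 : (1 : ℝ) ≤ q := one_le_pow₀ (by norm_num)
  have h2n : (2 : ℝ) ^ n = 2 * q := by
    rw [hq, ← pow_succ', Nat.sub_add_cancel (by omega)]
  have hM : ((2 ^ (2 * n) : ℕ) : ℝ) = 4 * q ^ 2 := by
    push_cast
    rw [mul_comm, pow_mul, h2n]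
    ring
  have hN : ((2 ^ (n - 1) * (2 ^ n - 1) : ℕ) : ℝ) = q * (2 * q - 1) := by
    rw [Nat.cast_mul, Nat.cast_sub Nat.one_le_two_pow]
    push_cast
    rw [h2n]
  have hS := srgSign_mul_self G h q hM
    (by rw [Nat.cast_mul, Nat.cast_sub Nat.one_le_two_pow]; push_cast; rw [h2n])
    (by rw [Nat.cast_mul, Nat.cast_sub Nat.one_le_two_pow]; push_cast; rfl)
    (by push_cast; rfl)
  have hdiag : ∀ x, srgSign G x x = 1 := by
    intro x
    norm_num [srgSign]
  have habs : ∀ x y, |srgSign G x y| = 1 := by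
    intro x y
    by_cases hxy : x = y
    · subst hxy
      simp [hdiag]
    · by_cases ha : G.Adj x y <;> norm_num [srgSign, hxy, ha]
  have hSt : (srgSign G).transpose = srgSign G := by
    ext x y
    simp [srgSign, Matrix.one_apply, G.adj_comm x y, eq_comm (a := x)]
  set P : Matrix V V ℝ := (1 / 2 : ℝ) • (1 : Matrix V V ℝ) - (1 / (4 * q)) • srgSign G with hP
  have hPt : P.transpose = P := by
    simp [hP, hSt]
  have hPP : P * P = P := by
    simp only [hP, mul_sub, sub_mul, Matrix.smul_mul, Matrix.mul_smul, mul_one, one_mul, hS]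
    match_scalars <;> field_simp <;> ring
  have hPdiag : ∀ x, P x x = (2 * q - 1) / (4 * q) := by
    intro x
    simp only [hP, Matrix.sub_apply, Matrix.smul_apply, Matrix.one_apply_eq, hdiag, smul_eq_mul]
    field_simp
    ring
  have htr : P.trace = ((2 ^ (n - 1) * (2 ^ n - 1) : ℕ) : ℝ) := by
    simp only [Matrix.trace, Matrix.diag, hPdiag, Finset.sum_const, Finset.card_univ, h.card,
      nsmul_eq_mul, hM, hN]
    field_simp
  obtain ⟨φ, hφ, hφt⟩ := exists_parseval_frame_of_projection P _ hPt hPP htr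
  have hc : 0 ≤ 4 * q / (2 * q - 1) := div_nonneg (by linarith) (by linarith)
  have hq' : 2 * q - 1 ≠ 0 := by linarith
  -- `4q / (2q - 1)` is the frame constant `M / N`.
  set c : ℝ := √(4 * q / (2 * q - 1)) with hcdef
  have hc2 : c * c = 4 * q / (2 * q - 1) := Real.mul_self_sqrt hc
  have hinner : ∀ x y, ⟪c • φ x, c • φ y⟫ = 4 * q / (2 * q - 1) * P x y := by
    intro x y
    rw [real_inner_smul_left, real_inner_smul_right, hφ, ← mul_assoc, hc2]
  refine ⟨fun x => c • φ x, fun x => ?_, ⟨1 / (2 * q - 1), fun x y hxy => ?_⟩, fun ψ => ?_⟩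
  · have h1 : ‖c • φ x‖ ^ 2 = 1 := by
      rw [← real_inner_self_eq_norm_sq, hinner, hPdiag]
      rw [div_mul_div_cancel₀ hq', div_self (by positivity)]
    exact (pow_eq_one_iff_of_nonneg (norm_nonneg _) two_ne_zero).mp h1
  · have hPxy : P x y = -(1 / (4 * q)) * srgSign G x y := by
      simp [hP, hxy]
    rw [hinner, hPxy, abs_mul, abs_mul, habs, abs_of_nonneg hc, abs_neg,
      abs_of_nonneg (by positivity)]
    field_simp
  · have hx : ∀ x, ⟪ψ, c • φ x⟫ ^ 2 = 4 * q / (2 * q - 1) * ⟪ψ, φ x⟫ ^ 2 := by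
      intro x
      rw [real_inner_smul_right, mul_pow, sq c, hc2]
    simp only [hx]
    rw [← Finset.mul_sum, hφt, hM, hN]
    congr 1
    field_simp
end

section
/- Let n ≥ 1, let q(x) = Σ_{i=1}^n x_{2i−1}·x_{2i} be the hyperbolic quadratic form on (ZMod 2)^{2n} and B(x,y) = Σ_{i=1}^n (x_{2i−1}·y_{2i} + x_{2i}·y_{2i−1}) its associated bilinear form. For every nonzero w ∈ (ZMod 2)^{2n}, the integer character sum Σ_{z : q(z) = 1} ε(B(w,z)), where ε(0) = 1 and ε(1) = −1, equals −2^{n−1} if q(w) = 0 and equals 2^{n−1} if q(w) = 1. -/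
/-!
Since `ε` is multiplicative and the indicator of `q(z) = 1` is `(1 - ε(q(z))) / 2`, twice the sum
over nonisotropic points is `∑_z ε(B(w,z)) - ∑_z ε(q(z) + B(w,z))`, both sums over the whole space.
Each of these factors as a product over the `n` hyperbolic planes. In the first one, a plane in
which `w` is nonzero contributes the sum of a nontrivial character, so the product vanishes
(`sum_eps_sympB`). In the second one, each plane contributes `2 ε(a b)`, where `(a, b)` is the
component of `w`, so the product is `2 ^ n * ε(q(w))` (`sum_eps_hypQ_add_sympB`).
-/

/-- The hyperbolic quadratic form `q(x) = ∑ᵢ x_{2i-1} x_{2i}` on `(ZMod 2)^{2n}`, where the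
`2n` coordinates are grouped into `n` consecutive pairs. -/
def hypQ (n : ℕ) (x : Fin n → ZMod 2 × ZMod 2) : ZMod 2 :=
  ∑ i, (x i).1 * (x i).2

/-- The associated bilinear form `B(x,y) = ∑ᵢ (x_{2i-1} y_{2i} + x_{2i} y_{2i-1})`. -/
def sympB (n : ℕ) (x y : Fin n → ZMod 2 × ZMod 2) : ZMod 2 :=
  ∑ i, ((x i).1 * (y i).2 + (x i).2 * (y i).1)

/-- The sign character `ε : ZMod 2 → ℤ`, with `ε(0) = 1` and `ε(1) = -1`. -/
def eps (a : ZMod 2) : ℤ := if a = 0 then 1 else -1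

lemma eps_add (a b : ZMod 2) : eps (a + b) = eps a * eps b := by
  revert a b; decide

lemma eps_sum {n : ℕ} (f : Fin n → ZMod 2) : eps (∑ i, f i) = ∏ i, eps (f i) := by
  induction n with
  | zero => simp [eps]
  | succ n ih => rw [Fin.sum_univ_succ, Fin.prod_univ_succ, eps_add, ih]

lemma sum_eps_sum {n : ℕ} (f : Fin n → ZMod 2 × ZMod 2 → ZMod 2) :
    ∑ z : Fin n → ZMod 2 × ZMod 2, eps (∑ i, f i (z i)) = ∏ i, ∑ p, eps (f i p) := by
  rw [Finset.prod_univ_sum, Fintype.piFinset_univ]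
  simp only [eps_sum]

lemma sum_eps_sympB (n : ℕ) (w : Fin n → ZMod 2 × ZMod 2) (hw : w ≠ 0) :
    ∑ z, eps (sympB n w z) = 0 := by
  obtain ⟨i, hi⟩ := Function.ne_iff.mp hw
  have hplane : ∀ v : ZMod 2 × ZMod 2, v ≠ 0 →
      ∑ p : ZMod 2 × ZMod 2, eps (v.1 * p.2 + v.2 * p.1) = 0 := by decide
  unfold sympB
  rw [sum_eps_sum fun i p => (w i).1 * p.2 + (w i).2 * p.1]
  exact Finset.prod_eq_zero (Finset.mem_univ i) (hplane (w i) hi)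

lemma sum_eps_hypQ_add_sympB (n : ℕ) (w : Fin n → ZMod 2 × ZMod 2) :
    ∑ z, eps (hypQ n z + sympB n w z) = 2 ^ n * eps (hypQ n w) := by
  have hplane : ∀ v : ZMod 2 × ZMod 2,
      ∑ p : ZMod 2 × ZMod 2, eps (p.1 * p.2 + (v.1 * p.2 + v.2 * p.1)) = 2 * eps (v.1 * v.2) := by
    decide
  simp only [hypQ, sympB, ← Finset.sum_add_distrib]
  rw [sum_eps_sum fun i p => p.1 * p.2 + ((w i).1 * p.2 + (w i).2 * p.1), eps_sum]
  simp only [hplane, Finset.prod_mul_distrib, Finset.prod_const, Finset.card_univ,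
    Fintype.card_fin]

lemma two_mul_sum_nonisotropic (n : ℕ) (w : Fin n → ZMod 2 × ZMod 2) (hw : w ≠ 0) :
    2 * ∑ z ∈ Finset.univ.filter (fun z => hypQ n z = 1), eps (sympB n w z) =
      -(2 ^ n * eps (hypQ n w)) := by
  have hind : ∀ a b : ZMod 2, 2 * (if a = 1 then eps b else 0) = eps b - eps (a + b) := by decide
  rw [Finset.sum_filter, Finset.mul_sum]
  simp only [hind]
  rw [Finset.sum_sub_distrib, sum_eps_sympB n w hw, sum_eps_hypQ_add_sympB, zero_sub]

/-- For `n ≥ 1` and any nonzero `w ∈ (ZMod 2)^{2n}`, the character sum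
`∑_{z : q(z) = 1} ε(B(w,z))` over the nonisotropic points equals `-2^{n-1}` if `q(w) = 0`
and equals `2^{n-1}` if `q(w) = 1`. -/
theorem char_sum_over_nonisotropic (n : ℕ) (hn : 1 ≤ n)
    (w : Fin n → ZMod 2 × ZMod 2) (hw : w ≠ 0) :
    (hypQ n w = 0 →
      ∑ z ∈ Finset.univ.filter (fun z => hypQ n z = 1), eps (sympB n w z) = -(2 ^ (n - 1))) ∧
    (hypQ n w = 1 →
      ∑ z ∈ Finset.univ.filter (fun z => hypQ n z = 1), eps (sympB n w z) = 2 ^ (n - 1)) := by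
  have h := two_mul_sum_nonisotropic n w hw
  obtain ⟨m, rfl⟩ : ∃ m, n = m + 1 := ⟨n - 1, by omega⟩
  rw [Nat.add_sub_cancel]
  have h0 : eps 0 = 1 := by decide
  have h1 : eps 1 = -1 := by decide
  constructor
  · intro hq
    rw [hq, h0, pow_succ] at h
    linarith
  · intro hq
    rw [hq, h1, pow_succ] at h
    linarith
end
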